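/- arXiv:0711.1373 — 2 statements merged into one kernel-verified Lean document; each statement's English description precedes it below -/
import Mathlib

section
/- On the region R(3): uniformly on every compact subset K of the interior of R(3), ln|F_n(z)|/(2√n) → (1/3)·Re(√(Li₂(z³))) as n → ∞; that is, sup_{z ∈ K} | ln|F_n(z)|/(2√n) − (1/3)·Re(√(Li₂(z³))) | → 0. -/
/-!
By Cauchy's formula, `2π F n x` is the integral of `exp (logGenFun x u) * uⁿ` over the angles of a
circle `‖u‖ = exp σ`, where `logGenFun x` is the logarithm of the generating function of
`n ↦ F n x`. Near a primitive `k`-th root of unity `a`, `logGenFun x (a * exp w)` is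
`Li₂(xᵏ) / (k² w)` plus a bounded term, so that the saddle point near `a` contributes
`exp (2 √n fₖ(x))` up to a power of `n`. Where `f₃` strictly dominates all the other `fₖ`,
everything away from the two primitive cube roots of unity is exponentially negligible on the
circle with `σ = f₃(x) / √n`. The contributions of the two cube roots are asymptotically Gaussian
integrals, whose moduli differ as soon as `Im x ≠ 0`, so that they cannot cancel. On the interior
of `R(3)`, the domination is strict by the open mapping theorem, and `Im x ≠ 0` because `f₃ < f₂`
at the real points other than `0`.
-/

open Complex Filter

/-- `partsCount k n` is the number of partitions of `n` with exactly `k` parts. -/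
noncomputable def partsCount (k n : ℕ) : ℕ := Nat.card {p : Nat.Partition n // p.parts.card = k}

/-- The partition polynomial `F_n(x) = ∑_{k=1}^n p_k(n) x^k`. -/
noncomputable def F (n : ℕ) (x : ℂ) : ℂ := ∑ k ∈ Finset.Icc 1 n, (partsCount k n : ℂ) * x ^ k

/-- The dilogarithm `Li₂(z) = ∑_{n=1}^∞ zⁿ/n²`. -/
noncomputable def dilog (z : ℂ) : ℂ := ∑' n : ℕ, z ^ (n + 1) / ((n : ℂ) + 1) ^ 2

/-- `fk k x = (1/k)·Re √(Li₂(x^k))` with the principal branch square root. -/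
noncomputable def fk (k : ℕ) (x : ℂ) : ℝ := (1 / (k : ℝ)) * ((dilog (x ^ k)) ^ (1 / 2 : ℂ)).re

/-- The region `R(1)`. -/
def R1 : Set ℂ := {x | ‖x‖ < 1 ∧ fk 2 x ≤ fk 1 x ∧ fk 3 x ≤ fk 1 x}

/-- The region `R(2)`. -/
def R2 : Set ℂ := {x | ‖x‖ < 1 ∧ fk 1 x ≤ fk 2 x ∧ fk 3 x ≤ fk 2 x}

/-- The region `R(3)`. -/
def R3 : Set ℂ := {x | ‖x‖ < 1 ∧ fk 1 x ≤ fk 3 x ∧ fk 2 x ≤ fk 3 x}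

namespace PartitionPolynomial

open scoped Topology

/-! ### The generating function and its logarithm -/

section PowerSeries

open PowerSeries
open scoped PowerSeries.WithPiTopology

lemma card_parts_mem_Icc {n : ℕ} (hn : 1 ≤ n) (p : n.Partition) :
    p.parts.card ∈ Finset.Icc 1 n := by
  refine Finset.mem_Icc.mpr ⟨Multiset.card_pos.mpr fun h => ?_, ?_⟩
  · have := p.parts_sum
    simp only [h, Multiset.sum_zero] at this
    omega
  · simpa [p.parts_sum] using
      Multiset.card_nsmul_le_sum (s := p.parts) (a := 1) fun _ hy => p.parts_pos hy

lemma F_eq_coeff_genFun {n : ℕ} (hn : 1 ≤ n) (x : ℂ) :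
    F n x = (Nat.Partition.genFun fun _ c => x ^ c).coeff n := by
  have hprod (p : n.Partition) :
      (p.parts.toFinsupp.prod fun _ c => x ^ c) = x ^ p.parts.card := by
    simp [Finsupp.prod, Finset.prod_pow_eq_pow_sum]
  simp_rw [Nat.Partition.coeff_genFun, hprod]
  rw [← Finset.sum_fiberwise_of_maps_to fun p _ => card_parts_mem_Icc hn p]
  refine Finset.sum_congr rfl fun k _ => ?_
  rw [Finset.sum_congr rfl fun p hp => by rw [(Finset.mem_filter.mp hp).2], Finset.sum_const,
    nsmul_eq_mul, partsCount, Nat.card_eq_fintype_card, Fintype.card_subtype]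

/-- The geometric series `∑ x ^ c * X ^ ((i + 1) * c)`, the generating function of the
multiplicity `c` of the part `i + 1`, in the form in which it occurs in
`Nat.Partition.hasProd_genFun`. -/
noncomputable def geomFactor (x : ℂ) (i : ℕ) : PowerSeries ℂ :=
  1 + ∑' j, x ^ (j + 1) • (X : PowerSeries ℂ) ^ ((i + 1) * (j + 1))

lemma coeff_geomFactor (x : ℂ) (i d : ℕ) :
    (geomFactor x i).coeff d =
      (1 : PowerSeries ℂ).coeff d + ∑' j, if d = (i + 1) * (j + 1) then x ^ (j + 1) else 0 := by
  have hs := Nat.Partition.summable_genFun_term (R := ℂ) (fun _ c => x ^ c) i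
  rw [geomFactor, map_add, hs.map_tsum _ (WithPiTopology.continuous_coeff _ _)]
  simp [coeff_X_pow]

lemma coeff_geomFactor_mul (x : ℂ) (i c : ℕ) :
    (geomFactor x i).coeff ((i + 1) * c) = x ^ c := by
  rw [coeff_geomFactor]
  cases c with
  | zero => simp
  | succ c =>
    rw [tsum_eq_single c fun j hj => if_neg ?_]
    · simp [coeff_one]
    · simpa using hj.symm

lemma coeff_geomFactor_of_not_dvd (x : ℂ) {i d : ℕ} (hd : ¬ i + 1 ∣ d) :
    (geomFactor x i).coeff d = 0 := by
  have hne (j : ℕ) : d ≠ (i + 1) * (j + 1) := fun h => hd (h ▸ dvd_mul_right _ _)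
  have hd0 : d ≠ 0 := fun h => hd (h ▸ dvd_zero _)
  simp [coeff_geomFactor, hne, coeff_one, hd0]

/-- `HasAbsEval A q v` says that the power series `A` converges absolutely at `q`, with sum `v`. -/
def HasAbsEval (A : PowerSeries ℂ) (q v : ℂ) : Prop :=
  Summable (fun n => ‖A.coeff n * q ^ n‖) ∧ HasSum (fun n => A.coeff n * q ^ n) v

lemma HasAbsEval.mul {A B : PowerSeries ℂ} {q a b : ℂ} (hA : HasAbsEval A q a)
    (hB : HasAbsEval B q b) : HasAbsEval (A * B) q (a * b) := by
  have hcoeff (n : ℕ) : (A * B).coeff n * q ^ n =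
      ∑ kl ∈ Finset.HasAntidiagonal.antidiagonal n,
        A.coeff kl.1 * q ^ kl.1 * (B.coeff kl.2 * q ^ kl.2) := by
    rw [coeff_mul, Finset.sum_mul]
    refine Finset.sum_congr rfl fun p hp => ?_
    rw [← Finset.HasAntidiagonal.mem_antidiagonal.mp hp, pow_add]
    ring
  have hs := summable_norm_sum_mul_antidiagonal_of_summable_norm hA.1 hB.1
  have ht := tsum_mul_tsum_eq_tsum_sum_antidiagonal_of_summable_norm hA.1 hB.1
  simp_rw [← hcoeff] at hs ht
  rw [hA.2.tsum_eq, hB.2.tsum_eq] at ht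
  exact ⟨hs, ht ▸ hs.of_norm.hasSum⟩

lemma hasAbsEval_one (q : ℂ) : HasAbsEval 1 q 1 := by
  have h (n : ℕ) (hn : n ≠ 0) : (1 : PowerSeries ℂ).coeff n * q ^ n = 0 := by simp [coeff_one, hn]
  refine ⟨summable_of_ne_finset_zero (s := {0}) fun n hn => ?_, ?_⟩
  · rw [h n (by simpa using hn), norm_zero]
  · simpa using hasSum_single 0 h

lemma norm_mul_pow_lt_one {x q : ℂ} (hx : ‖x‖ < 1) (hq : ‖q‖ < 1) (i : ℕ) : ‖x * q ^ i‖ < 1 := by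
  rw [norm_mul, norm_pow]
  exact mul_lt_one_of_nonneg_of_lt_one_left (norm_nonneg _) hx
    (pow_le_one₀ (norm_nonneg _) hq.le)

lemma hasAbsEval_geomFactor {x q : ℂ} (hx : ‖x‖ < 1) (hq : ‖q‖ < 1) (i : ℕ) :
    HasAbsEval (geomFactor x i) q (1 - x * q ^ (i + 1))⁻¹ := by
  have hinj : Function.Injective fun c : ℕ => (i + 1) * c :=
    mul_right_injective₀ (Nat.succ_ne_zero i)
  have hlt := norm_mul_pow_lt_one hx hq (i + 1)
  have hzero (d : ℕ) (hd : d ∉ Set.range fun c : ℕ => (i + 1) * c) :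
      (geomFactor x i).coeff d * q ^ d = 0 := by
    rw [coeff_geomFactor_of_not_dvd, zero_mul]
    rintro ⟨c, rfl⟩
    exact hd ⟨c, rfl⟩
  have hterm (c : ℕ) : (geomFactor x i).coeff ((i + 1) * c) * q ^ ((i + 1) * c) =
      (x * q ^ (i + 1)) ^ c := by
    rw [coeff_geomFactor_mul, mul_pow, pow_mul]
  constructor
  · rw [← hinj.summable_iff fun d hd => by rw [hzero d hd, norm_zero]]
    simpa only [Function.comp_def, hterm, norm_pow] using
      summable_geometric_of_lt_one (norm_nonneg _) hlt
  · rw [← hinj.hasSum_iff hzero]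
    simpa only [Function.comp_def, hterm] using hasSum_geometric_of_norm_lt_one hlt

lemma hasAbsEval_prod_geomFactor {x q : ℂ} (hx : ‖x‖ < 1) (hq : ‖q‖ < 1) (N : ℕ) :
    HasAbsEval (∏ i ∈ Finset.range N, geomFactor x i) q
      (∏ i ∈ Finset.range N, (1 - x * q ^ (i + 1))⁻¹) := by
  induction N with
  | zero => simpa using hasAbsEval_one q
  | succ N ih =>
    simpa only [Finset.prod_range_succ] using ih.mul (hasAbsEval_geomFactor hx hq N)

lemma tendsto_coeff_prod_geomFactor {n : ℕ} (hn : 1 ≤ n) (x : ℂ) :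
    Tendsto (fun N => (∏ i ∈ Finset.range N, geomFactor x i).coeff n) atTop (𝓝 (F n x)) := by
  have h := (Nat.Partition.hasProd_genFun (R := ℂ) fun _ c => x ^ c).tendsto_prod_nat
  rw [F_eq_coeff_genFun hn]
  exact (WithPiTopology.tendsto_iff_coeff_tendsto (R := ℂ) _ _ _).mp h n

lemma integral_exp_int_mul_I (m : ℤ) :
    ∫ φ in (-Real.pi)..Real.pi, cexp (m * I * φ) = if m = 0 then 2 * Real.pi else 0 := by
  split_ifs with h
  · simp [h]
    ring
  · have hper : cexp (m * I * Real.pi) = cexp (m * I * (-Real.pi : ℝ)) :=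
      Complex.exp_eq_exp_iff_exists_int.mpr ⟨m, by push_cast; ring⟩
    rw [integral_exp_mul_complex (by simpa using h), hper, sub_self, zero_div,
      Complex.ofReal_zero]

lemma HasAbsEval.two_pi_mul_coeff_eq_integral {A : PowerSeries ℂ} {v : ℝ → ℂ} {σ : ℝ}
    (h : ∀ φ : ℝ, HasAbsEval A (cexp (σ + φ * I))⁻¹ (v φ)) (n : ℕ) :
    2 * Real.pi * A.coeff n =
      ∫ φ in (-Real.pi)..Real.pi, v φ * cexp (n * (σ + φ * I)) := by
  let term (m : ℕ) (φ : ℝ) : ℂ :=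
    A.coeff m * (cexp (σ + φ * I))⁻¹ ^ m * cexp (n * (σ + φ * I))
  have hnorm (m : ℕ) (φ : ℝ) : ‖term m φ‖ = ‖A.coeff m * (cexp (σ + (0 : ℝ) * I))⁻¹ ^ m‖ *
      Real.exp (n * σ) := by
    simp [term, Complex.norm_exp]
  have hsum := intervalIntegral.hasSum_integral_of_dominated_convergence
    (a := -Real.pi) (b := Real.pi) (μ := MeasureTheory.volume) (F := term)
    (f := fun φ => v φ * cexp (n * (σ + φ * I)))
    (fun m _ => ‖A.coeff m * (cexp (σ + (0 : ℝ) * I))⁻¹ ^ m‖ * Real.exp (n * σ))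
    (fun m => Continuous.aestronglyMeasurable (by
      simp only [term, ← Complex.exp_neg]
      fun_prop))
    (fun m => .of_forall fun φ _ => (hnorm m φ).le)
    (.of_forall fun _ _ => (h 0).1.mul_right _)
    (by simp)
    (.of_forall fun φ _ => (h φ).2.mul_right _)
  have hterm (m : ℕ) : ∫ φ in (-Real.pi)..Real.pi, term m φ =
      if m = n then 2 * Real.pi * A.coeff n else 0 := by
    have hsplit (φ : ℝ) : term m φ = A.coeff m * cexp (((n : ℂ) - m) * σ) *
        cexp (((n - m : ℤ) : ℂ) * I * φ) := by
      simp only [term, ← Complex.exp_neg, ← Complex.exp_nat_mul, mul_assoc, ← Complex.exp_add]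
      congr 2
      push_cast
      ring
    simp_rw [hsplit]
    rw [intervalIntegral.integral_const_mul, integral_exp_int_mul_I]
    rcases eq_or_ne m n with rfl | hmn
    · simp [mul_comm]
    · have : (n : ℤ) - m ≠ 0 := sub_ne_zero.mpr (mod_cast hmn.symm)
      simp [hmn, this]
  simp only [hterm] at hsum
  exact (hasSum_ite_eq n _).unique hsum

end PowerSeries

lemma norm_natCast_add_one (j : ℕ) : ‖(j : ℂ) + 1‖ = j + 1 :=
  mod_cast Complex.norm_natCast (j + 1)

lemma hasSum_neg_log_one_sub {z : ℂ} (hz : ‖z‖ < 1) :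
    HasSum (fun j : ℕ => z ^ (j + 1) / ((j : ℂ) + 1)) (-log (1 - z)) := by
  simpa using (hasSum_nat_add_iff' 1).mpr (hasSum_taylorSeries_neg_log hz)

section LogGenFun

/-- The logarithm `∑ xʲ / (j (uʲ - 1))` of the generating function `∏ (1 - x u⁻ⁱ)⁻¹` of the
partition polynomials, as a function of the inverse `u` of the usual variable `q`; it is meant
for `‖x‖ < 1 < ‖u‖`. -/
noncomputable def logGenFun (x u : ℂ) : ℂ :=
  ∑' j : ℕ, x ^ (j + 1) / ((j : ℂ) + 1) * (u ^ (j + 1) - 1)⁻¹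

variable {x q u : ℂ}

lemma norm_log_series_term_le (hx : ‖x‖ < 1) (hq : ‖q‖ < 1) (i j : ℕ) :
    ‖(x * q ^ (i + 1)) ^ (j + 1) / ((j : ℂ) + 1)‖ ≤ ‖q‖ ^ i * ‖x‖ ^ j := by
  rw [norm_div, norm_natCast_add_one]
  refine (div_le_self (norm_nonneg _) (le_add_of_nonneg_left j.cast_nonneg)).trans ?_
  rw [norm_pow, norm_mul, norm_pow, mul_pow, ← pow_mul, mul_comm]
  gcongr ?_ * ?_
  · exact pow_le_pow_of_le_one (norm_nonneg _) hq.le (by nlinarith)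
  · exact pow_le_pow_of_le_one (norm_nonneg _) hx.le j.le_succ

lemma summable_log_double_series (hx : ‖x‖ < 1) (hq : ‖q‖ < 1) :
    Summable fun p : ℕ × ℕ => (x * q ^ (p.1 + 1)) ^ (p.2 + 1) / ((p.2 : ℂ) + 1) :=
  .of_norm_bounded
    ((summable_geometric_of_lt_one (norm_nonneg _) hq).mul_of_nonneg
      (summable_geometric_of_lt_one (norm_nonneg _) hx)
      (fun _ => by positivity) fun _ => by positivity)
    fun p => norm_log_series_term_le hx hq p.1 p.2

lemma norm_log_one_sub_le (hx : ‖x‖ < 1) (hq : ‖q‖ < 1) (i : ℕ) :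
    ‖-log (1 - x * q ^ (i + 1))‖ ≤ ‖q‖ ^ i * (1 - ‖x‖)⁻¹ := by
  rw [← (hasSum_neg_log_one_sub (norm_mul_pow_lt_one hx hq (i + 1))).tsum_eq]
  exact tsum_of_norm_bounded ((hasSum_geometric_of_lt_one (norm_nonneg _) hx).mul_left _)
    fun j => norm_log_series_term_le hx hq i j

lemma norm_inv_lt_one (hu : 1 < ‖u‖) : ‖u⁻¹‖ < 1 := by
  rw [norm_inv]
  exact inv_lt_one_of_one_lt₀ hu

lemma hasSum_inv_pow_succ (hu : 1 < ‖u‖) : HasSum (fun i : ℕ => u⁻¹ ^ (i + 1)) (u - 1)⁻¹ := by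
  have hu0 : u ≠ 0 := norm_pos_iff.mp (zero_lt_one.trans hu)
  have h := (hasSum_geometric_of_norm_lt_one (norm_inv_lt_one hu)).mul_left u⁻¹
  have hval : u⁻¹ * (1 - u⁻¹)⁻¹ = (u - 1)⁻¹ := by
    rw [← mul_inv, mul_sub, mul_one, mul_inv_cancel₀ hu0]
  rw [hval] at h
  simpa only [pow_succ'] using h

lemma hasSum_logGenFun (hx : ‖x‖ < 1) (hu : 1 < ‖u‖) :
    HasSum (fun i : ℕ => -log (1 - x * u⁻¹ ^ (i + 1))) (logGenFun x u) := by
  have hq := norm_inv_lt_one hu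
  have hs := summable_log_double_series hx hq
  have hrow (i : ℕ) := hasSum_neg_log_one_sub (norm_mul_pow_lt_one hx hq (i + 1))
  have hcol (j : ℕ) : HasSum (fun i : ℕ => (x * u⁻¹ ^ (i + 1)) ^ (j + 1) / ((j : ℂ) + 1))
      (x ^ (j + 1) / ((j : ℂ) + 1) * (u ^ (j + 1) - 1)⁻¹) := by
    have huj : 1 < ‖u ^ (j + 1)‖ := by
      rw [norm_pow]
      exact one_lt_pow₀ hu j.succ_ne_zero
    refine ((hasSum_inv_pow_succ huj).mul_left (x ^ (j + 1) / ((j : ℂ) + 1))).congr_fun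
      fun i => ?_
    rw [← inv_pow, mul_pow, pow_right_comm]
    ring
  convert hs.hasSum.prod_fiberwise hrow using 1
  rw [← (Equiv.prodComm ℕ ℕ).tsum_eq]
  exact (hs.prod_symm.hasSum.prod_fiberwise hcol).tsum_eq

lemma one_sub_mul_pow_ne_zero (hx : ‖x‖ < 1) (hq : ‖q‖ < 1) (i : ℕ) : 1 - x * q ^ i ≠ 0 :=
  fun h => by simpa [← sub_eq_zero.mp h] using norm_mul_pow_lt_one hx hq i

lemma prod_inv_one_sub_eq_exp (hx : ‖x‖ < 1) (hu : 1 < ‖u‖) (N : ℕ) :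
    ∏ i ∈ Finset.range N, (1 - x * u⁻¹ ^ (i + 1))⁻¹ =
      cexp (∑ i ∈ Finset.range N, -log (1 - x * u⁻¹ ^ (i + 1))) := by
  rw [Complex.exp_sum]
  refine Finset.prod_congr rfl fun i _ => ?_
  rw [Complex.exp_neg, exp_log (one_sub_mul_pow_ne_zero hx (norm_inv_lt_one hu) (i + 1))]

lemma norm_prod_inv_one_sub_le (hx : ‖x‖ < 1) (hu : 1 < ‖u‖) (N : ℕ) :
    ‖∏ i ∈ Finset.range N, (1 - x * u⁻¹ ^ (i + 1))⁻¹‖ ≤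
      Real.exp ((1 - ‖u⁻¹‖)⁻¹ * (1 - ‖x‖)⁻¹) := by
  have hq := norm_inv_lt_one hu
  have : 0 < 1 - ‖x‖ := sub_pos.mpr hx
  rw [prod_inv_one_sub_eq_exp hx hu]
  refine (norm_exp_le_exp_norm _).trans (Real.exp_le_exp.mpr ?_)
  calc ‖∑ i ∈ Finset.range N, -log (1 - x * u⁻¹ ^ (i + 1))‖
      ≤ ∑ i ∈ Finset.range N, ‖u⁻¹‖ ^ i * (1 - ‖x‖)⁻¹ :=
        norm_sum_le_of_le _ fun i _ => norm_log_one_sub_le hx hq i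
    _ ≤ (1 - ‖u⁻¹‖)⁻¹ * (1 - ‖x‖)⁻¹ :=
        sum_le_hasSum _ (fun _ _ => by positivity)
          ((hasSum_geometric_of_lt_one (norm_nonneg _) hq).mul_right _)

lemma tendsto_prod_inv_one_sub (hx : ‖x‖ < 1) (hu : 1 < ‖u‖) :
    Tendsto (fun N => ∏ i ∈ Finset.range N, (1 - x * u⁻¹ ^ (i + 1))⁻¹) atTop
      (𝓝 (cexp (logGenFun x u))) := by
  simp only [prod_inv_one_sub_eq_exp hx hu]
  exact (continuous_exp.tendsto _).comp (hasSum_logGenFun hx hu).tendsto_sum_nat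

end LogGenFun

lemma norm_exp_ofReal_add_mul_I (σ φ : ℝ) : ‖cexp (σ + φ * I)‖ = Real.exp σ := by
  simp [Complex.norm_exp]

lemma one_lt_norm_exp_ofReal_add_mul_I {σ : ℝ} (hσ : 0 < σ) (φ : ℝ) :
    1 < ‖cexp (σ + φ * I)‖ := by
  simpa [norm_exp_ofReal_add_mul_I] using hσ

/-- The integrand at the angle `φ` of the Cauchy integral for `2π F n x` over the circle
`q = exp (-(σ + φ I))`. -/
noncomputable def integrand (n : ℕ) (x : ℂ) (σ φ : ℝ) : ℂ :=
  cexp (logGenFun x (cexp (σ + φ * I)) + n * (σ + φ * I))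

theorem two_pi_mul_F_eq_integral {n : ℕ} (hn : 1 ≤ n) {x : ℂ} (hx : ‖x‖ < 1) {σ : ℝ}
    (hσ : 0 < σ) :
    2 * Real.pi * F n x = ∫ φ in (-Real.pi)..Real.pi, integrand n x σ φ := by
  have hu := one_lt_norm_exp_ofReal_add_mul_I hσ
  let v (N : ℕ) (φ : ℝ) : ℂ := ∏ i ∈ Finset.range N, (1 - x * (cexp (σ + φ * I))⁻¹ ^ (i + 1))⁻¹
  have hcoeff (N : ℕ) :=
    HasAbsEval.two_pi_mul_coeff_eq_integral (v := v N)
      (fun φ => hasAbsEval_prod_geomFactor hx (norm_inv_lt_one (hu φ)) N) n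
  have hlim := (tendsto_coeff_prod_geomFactor hn x).const_mul (2 * Real.pi : ℂ)
  simp only [hcoeff] at hlim
  refine tendsto_nhds_unique hlim
    (intervalIntegral.tendsto_integral_filter_of_dominated_convergence
      (fun _ => Real.exp ((1 - Real.exp (-σ))⁻¹ * (1 - ‖x‖)⁻¹) * Real.exp (n * σ)) ?_ ?_ ?_ ?_)
  · refine .of_forall fun N => Continuous.aestronglyMeasurable ?_
    refine Continuous.mul (continuous_finsetProd _ fun i _ => Continuous.inv₀ ?_ fun φ =>
      one_sub_mul_pow_ne_zero hx (norm_inv_lt_one (hu φ)) (i + 1)) (by fun_prop)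
    simp only [← Complex.exp_neg]
    fun_prop
  · refine .of_forall fun N => .of_forall fun φ _ => ?_
    rw [norm_mul]
    refine mul_le_mul ?_ (by simp [Complex.norm_exp]) (norm_nonneg _) (Real.exp_pos _).le
    refine (norm_prod_inv_one_sub_le hx (hu φ) N).trans_eq ?_
    rw [norm_inv, norm_exp_ofReal_add_mul_I, Real.exp_neg]
  · simp
  · refine .of_forall fun φ _ => ?_
    rw [integrand, Complex.exp_add]
    exact (tendsto_prod_inv_one_sub hx (hu φ)).mul_const _

/-! ### Domination among the exponents -/

/-- The square `(‖z‖ + Re z) / 2` of the real part of the principal square root of `z`. -/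
noncomputable def reSqrtSq (z : ℂ) : ℝ := (‖z‖ + z.re) / 2

lemma reSqrtSq_nonneg (z : ℂ) : 0 ≤ reSqrtSq z := by
  have := (abs_le.mp (abs_re_le_norm z)).1
  rw [reSqrtSq]
  linarith

lemma fk_eq_sqrt_reSqrtSq (k : ℕ) (x : ℂ) :
    fk k x = 1 / (k : ℝ) * √(reSqrtSq (dilog (x ^ k))) := by
  rw [fk, one_div (2 : ℂ), cpow_inv_two_re, reSqrtSq]

lemma fk_nonneg (k : ℕ) (x : ℂ) : 0 ≤ fk k x := by
  rw [fk_eq_sqrt_reSqrtSq]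
  positivity

lemma fk_sq (k : ℕ) (x : ℂ) : fk k x ^ 2 = reSqrtSq (dilog (x ^ k)) / (k : ℝ) ^ 2 := by
  rw [fk_eq_sqrt_reSqrtSq, mul_pow, Real.sq_sqrt (reSqrtSq_nonneg _)]
  ring

lemma re_mul_le_reSqrtSq {ν : ℂ} (hν : ‖ν - 1 / 2‖ = 1 / 2) (z : ℂ) :
    (ν * z).re ≤ reSqrtSq z := by
  have hsplit : ν * z = (ν - 1 / 2) * z + (1 / 2 : ℝ) * z := by
    push_cast
    ring
  have hle : ((ν - 1 / 2) * z).re ≤ 1 / 2 * ‖z‖ := by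
    rw [← hν, ← norm_mul]
    exact re_le_norm _
  rw [hsplit, add_re, re_ofReal_mul, reSqrtSq]
  linarith

/-- `IsDominant k x` says that `fk k x` strictly dominates all the other `fk j x`, `0 < j`. -/
structure IsDominant (k : ℕ) (x : ℂ) : Prop where
  norm_lt_one : ‖x‖ < 1
  fk_pos : 0 < fk k x
  fk_lt : ∀ j, 0 < j → j ≠ k → fk j x < fk k x

lemma pos_of_fk_pos {k : ℕ} {x : ℂ} (h : 0 < fk k x) : 0 < k :=
  Nat.pos_of_ne_zero fun hk => by simp [hk, fk] at h

lemma tsum_dvd_eq_tsum_mul {M : Type*} [AddCommMonoid M] [TopologicalSpace M] {k : ℕ} (hk : 0 < k)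
    (f : ℕ → M) :
    ∑' j : ℕ, (if k ∣ j + 1 then f (j + 1) else 0) = ∑' m : ℕ, f (k * (m + 1)) := by
  have hsub (m : ℕ) : k * (m + 1) - 1 + 1 = k * (m + 1) :=
    Nat.sub_add_cancel (Nat.mul_pos hk m.succ_pos)
  have hinj : Function.Injective fun m : ℕ => k * (m + 1) - 1 := fun a b hab => by
    have : k * (a + 1) = k * (b + 1) := by
      rw [← hsub a, ← hsub b]
      exact congrArg (· + 1) hab
    exact Nat.succ_injective (Nat.eq_of_mul_eq_mul_left hk this)
  have hsupp : (Function.support fun j : ℕ => if k ∣ j + 1 then f (j + 1) else 0) ⊆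
      Set.range fun m : ℕ => k * (m + 1) - 1 := by
    intro j hj
    obtain ⟨c, hc⟩ : k ∣ j + 1 := by
      by_contra hd
      simp [hd] at hj
    obtain ⟨m, rfl⟩ : ∃ m, c = m + 1 :=
      Nat.exists_eq_succ_of_ne_zero (by rintro rfl; simp at hc)
    exact ⟨m, by simp only [← hc, Nat.add_sub_cancel]⟩
  rw [← hinj.tsum_eq hsupp]
  simp [hsub]

lemma tsum_dvd_eq_dilog {k : ℕ} (hk : 0 < k) (x ν : ℂ) :
    ∑' j : ℕ, x ^ (j + 1) / ((j : ℂ) + 1) * (if k ∣ j + 1 then ν / ((j : ℂ) + 1) else 0) =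
      ν * (dilog (x ^ k) / (k : ℂ) ^ 2) := by
  have h := tsum_dvd_eq_tsum_mul hk fun m : ℕ => x ^ m / (m : ℂ) * (ν / m)
  simp only [Nat.cast_mul, Nat.cast_add_one] at h
  simp only [mul_ite, mul_zero]
  rw [h, dilog, ← tsum_div_const, ← tsum_mul_left]
  refine tsum_congr fun m => ?_
  have hk0 : (k : ℂ) ≠ 0 := Nat.cast_ne_zero.mpr hk.ne'
  have hm0 : (m : ℂ) + 1 ≠ 0 := Nat.cast_add_one_ne_zero m
  rw [pow_mul]
  field_simp

/-! ### Minor arcs -/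

lemma norm_sub_one_le_norm_pow_sub_one {u : ℂ} (hu : 1 < ‖u‖) (j : ℕ) :
    ‖u‖ - 1 ≤ ‖u ^ (j + 1) - 1‖ :=
  calc ‖u‖ - 1 ≤ ‖u‖ ^ (j + 1) - 1 := by gcongr; exact le_self_pow₀ hu.le j.succ_ne_zero
    _ ≤ ‖u ^ (j + 1) - 1‖ := by simpa using norm_sub_norm_le (u ^ (j + 1)) 1

lemma norm_inv_pow_sub_one_le {u : ℂ} (hu : 1 < ‖u‖) (j : ℕ) :
    ‖(u ^ (j + 1) - 1)⁻¹‖ ≤ (‖u‖ - 1)⁻¹ := by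
  rw [norm_inv]
  exact inv_anti₀ (sub_pos.mpr hu) (norm_sub_one_le_norm_pow_sub_one hu j)

lemma norm_pow_div_mul_le {x c : ℂ} {r C : ℝ} (hx : ‖x‖ ≤ r) (hc : ‖c‖ ≤ C) (j : ℕ) :
    ‖x ^ (j + 1) / ((j : ℂ) + 1) * c‖ ≤ r ^ (j + 1) * C := by
  rw [norm_mul, norm_div, norm_pow, norm_natCast_add_one]
  have hr : 0 ≤ r := (norm_nonneg x).trans hx
  gcongr
  exact (div_le_self (by positivity) (le_add_of_nonneg_left j.cast_nonneg)).trans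
    (pow_le_pow_left₀ (norm_nonneg _) hx _)

lemma summable_pow_succ {r : ℝ} (h0 : 0 ≤ r) (h1 : r < 1) : Summable fun j : ℕ => r ^ (j + 1) :=
  (summable_nat_add_iff 1).mpr (summable_geometric_of_lt_one h0 h1)

lemma summable_pow_div_mul {x : ℂ} (hx : ‖x‖ < 1) {c : ℕ → ℂ} {C : ℝ} (hc : ∀ j, ‖c j‖ ≤ C) :
    Summable fun j : ℕ => x ^ (j + 1) / ((j : ℂ) + 1) * c j :=
  .of_norm_bounded ((summable_pow_succ (norm_nonneg x) hx).mul_right C)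
    fun j => norm_pow_div_mul_le le_rfl (hc j) j

lemma tendsto_tsum_pow_div_mul {α : Type*} {l : Filter α} {X : α → ℂ} {x₀ : ℂ} (hx₀ : ‖x₀‖ < 1)
    (hX : Tendsto X l (𝓝 x₀)) {c : ℕ → α → ℂ} {c₀ : ℕ → ℂ} {C : ℝ}
    (hc : ∀ j, Tendsto (c j) l (𝓝 (c₀ j))) (hC : ∀ᶠ p in l, ∀ j, ‖c j p‖ ≤ C) :
    Tendsto (fun p => ∑' j : ℕ, X p ^ (j + 1) / ((j : ℂ) + 1) * c j p) l
      (𝓝 (∑' j : ℕ, x₀ ^ (j + 1) / ((j : ℂ) + 1) * c₀ j)) := by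
  obtain ⟨ρ, hρ, hρ1⟩ := exists_between hx₀
  refine tendsto_tsum_of_dominated_convergence
    ((summable_pow_succ ((norm_nonneg _).trans hρ.le) hρ1).mul_right C)
    (fun j => ((hX.pow (j + 1)).div_const _).mul (hc j)) ?_
  filter_upwards [hX.norm.eventually (gt_mem_nhds hρ), hC] with p hp hCp j
  exact norm_pow_div_mul_le hp.le (hCp j) j

lemma tendsto_mul_inv_exp_sub_one :
    Tendsto (fun z : ℂ => z * (cexp z - 1)⁻¹) (𝓝[≠] 0) (𝓝 1) := by
  have h := (hasDerivAt_exp 0).tendsto_slope.inv₀ (by simp)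
  rw [Complex.exp_zero, inv_one] at h
  refine h.congr fun z => ?_
  simp [slope_def_field, div_eq_mul_inv]

lemma norm_re_div_sub_half {w : ℂ} (hw : 0 < w.re) : ‖(w.re : ℂ) / w - 1 / 2‖ = 1 / 2 := by
  have hw0 : w ≠ 0 := by
    rintro rfl
    simp at hw
  have hsplit : (w.re : ℂ) / w - 1 / 2 = 1 / 2 * ((starRingEnd ℂ) w / w) := by
    have := add_conj w
    field_simp
    push_cast at this
    linear_combination -this
  rw [hsplit, norm_mul, norm_div (starRingEnd ℂ w), norm_conj, div_self (norm_ne_zero_iff.mpr hw0)]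
  simp

section LocalGap

variable {α : Type*} {l : Filter α} {X W : α → ℂ} {x₀ a : ℂ}

lemma one_lt_norm_mul_exp (ha : ‖a‖ = 1) {w : ℂ} (hw : 0 < w.re) : 1 < ‖a * cexp w‖ := by
  simpa [ha, Complex.norm_exp] using hw

lemma norm_re_mul_inv_pow_sub_one_le (ha : ‖a‖ = 1) {w : ℂ} (hw : 0 < w.re) (j : ℕ) :
    ‖(w.re : ℂ) * ((a * cexp w) ^ (j + 1) - 1)⁻¹‖ ≤ 1 := by
  have hle := norm_sub_one_le_norm_pow_sub_one (one_lt_norm_mul_exp ha hw) j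
  rw [norm_mul, ha, one_mul, Complex.norm_exp] at hle
  have hre : w.re ≤ ‖(a * cexp w) ^ (j + 1) - 1‖ := by
    linarith [Real.add_one_le_exp w.re]
  rw [norm_mul, norm_inv, norm_real, Real.norm_of_nonneg hw.le]
  exact mul_inv_le_one_of_le₀ hre (norm_nonneg _)

lemma tendsto_re_mul_inv_pow_sub_one_of_ne (hW : Tendsto W l (𝓝[{w | 0 < w.re}] 0)) {j : ℕ}
    (hj : a ^ (j + 1) ≠ 1) :
    Tendsto (fun p => ((W p).re : ℂ) * ((a * cexp (W p)) ^ (j + 1) - 1)⁻¹) l (𝓝 0) := by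
  have hW0 := (tendsto_nhdsWithin_iff.mp hW).1
  have hcont : ContinuousAt (fun w : ℂ => (w.re : ℂ) * ((a * cexp w) ^ (j + 1) - 1)⁻¹) 0 :=
    ContinuousAt.mul (by fun_prop)
      (ContinuousAt.inv₀ (by fun_prop) (by simpa [sub_eq_zero] using hj))
  simpa [Function.comp_def] using hcont.tendsto.comp hW0

lemma tendsto_re_mul_inv_pow_sub_one_of_eq (hW : Tendsto W l (𝓝[{w | 0 < w.re}] 0)) {ν : ℂ}
    (hν : Tendsto (fun p => ((W p).re : ℂ) / W p) l (𝓝 ν)) {j : ℕ} (hj : a ^ (j + 1) = 1) :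
    Tendsto (fun p => ((W p).re : ℂ) * ((a * cexp (W p)) ^ (j + 1) - 1)⁻¹) l
      (𝓝 (ν / ((j : ℂ) + 1))) := by
  obtain ⟨hW0, hWpos⟩ := tendsto_nhdsWithin_iff.mp hW
  have hj0 : (j : ℂ) + 1 ≠ 0 := Nat.cast_add_one_ne_zero j
  have hne : ∀ᶠ p in l, W p ≠ 0 := hWpos.mono fun p hp h0 => by
    have hre : 0 < (W p).re := hp
    simp [h0] at hre
  have hz : Tendsto (fun p => ((j : ℂ) + 1) * W p) l (𝓝[≠] 0) :=
    tendsto_nhdsWithin_iff.mpr ⟨by simpa using hW0.const_mul ((j : ℂ) + 1),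
      hne.mono fun p hp => mul_ne_zero hj0 hp⟩
  have hlim := (hν.div_const ((j : ℂ) + 1)).mul (tendsto_mul_inv_exp_sub_one.comp hz)
  rw [mul_one] at hlim
  refine hlim.congr' (hne.mono fun p hp => ?_)
  have hpow : (a * cexp (W p)) ^ (j + 1) = cexp (((j : ℂ) + 1) * W p) := by
    rw [mul_pow, hj, one_mul, ← Complex.exp_nat_mul, Nat.cast_add_one]
  simp only [Function.comp_apply, hpow]
  field_simp

lemma tendsto_re_mul_logGenFun (hx₀ : ‖x₀‖ < 1) (hX : Tendsto X l (𝓝 x₀)) (ha : ‖a‖ = 1)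
    (hW : Tendsto W l (𝓝[{w | 0 < w.re}] 0)) {c : ℕ → ℂ}
    (hc : ∀ j : ℕ, Tendsto (fun p => ((W p).re : ℂ) * ((a * cexp (W p)) ^ (j + 1) - 1)⁻¹) l
      (𝓝 (c j))) :
    Tendsto (fun p => (W p).re * (logGenFun (X p) (a * cexp (W p))).re) l
      (𝓝 (∑' j : ℕ, x₀ ^ (j + 1) / ((j : ℂ) + 1) * c j).re) := by
  have hlim := tendsto_tsum_pow_div_mul hx₀ hX hc (C := 1)
    ((tendsto_nhdsWithin_iff.mp hW).2.mono fun p hp => norm_re_mul_inv_pow_sub_one_le ha hp)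
  refine ((continuous_re.tendsto _).comp hlim).congr fun p => ?_
  rw [Function.comp_apply, ← re_ofReal_mul, logGenFun, ← tsum_mul_left]
  exact congrArg re (tsum_congr fun j => by ring)

lemma tendsto_re_mul_logGenFun_of_infinite_order (hx₀ : ‖x₀‖ < 1) (hX : Tendsto X l (𝓝 x₀))
    (ha : ‖a‖ = 1) (hW : Tendsto W l (𝓝[{w | 0 < w.re}] 0)) (ha' : ¬ IsOfFinOrder a) :
    Tendsto (fun p => (W p).re * (logGenFun (X p) (a * cexp (W p))).re) l (𝓝 0) := by
  have hne (j : ℕ) : a ^ (j + 1) ≠ 1 := fun h =>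
    ha' (isOfFinOrder_iff_pow_eq_one.mpr ⟨j + 1, j.succ_pos, h⟩)
  simpa using tendsto_re_mul_logGenFun hx₀ hX ha hW fun j =>
    tendsto_re_mul_inv_pow_sub_one_of_ne hW (hne j)

lemma exists_tendsto_of_ultrafilter {g : Ultrafilter α} (hx₀ : ‖x₀‖ < 1) (hX : Tendsto X g (𝓝 x₀))
    (hW : Tendsto W g (𝓝[{w | 0 < w.re}] 0)) {k : ℕ} (hk : 0 < k) (ha : IsPrimitiveRoot a k) :
    ∃ ν : ℂ, ‖ν - 1 / 2‖ = 1 / 2 ∧ Tendsto (fun p => ((W p).re : ℂ) / W p) g (𝓝 ν) ∧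
      Tendsto (fun p => (W p).re * (logGenFun (X p) (a * cexp (W p))).re) g
        (𝓝 (ν * (dilog (x₀ ^ k) / (k : ℂ) ^ 2)).re) := by
  have hsphere : ∀ᶠ p in (g : Filter α), ((W p).re : ℂ) / W p ∈ Metric.sphere (1 / 2 : ℂ) (1 / 2) :=
    (tendsto_nhdsWithin_iff.mp hW).2.mono fun p hp =>
      mem_sphere_iff_norm.mpr (norm_re_div_sub_half hp)
  obtain ⟨ν, hν, hlim⟩ := (isCompact_sphere (1 / 2 : ℂ) (1 / 2)).ultrafilter_le_nhds'
    (g.map fun p => ((W p).re : ℂ) / W p) hsphere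
  refine ⟨ν, mem_sphere_iff_norm.mp hν, hlim, ?_⟩
  rw [← tsum_dvd_eq_dilog hk x₀ ν]
  refine tendsto_re_mul_logGenFun hx₀ hX (ha.norm'_eq_one hk.ne') hW fun j => ?_
  split_ifs with hd
  · exact tendsto_re_mul_inv_pow_sub_one_of_eq hW hlim ((ha.pow_eq_one_iff_dvd _).mpr hd)
  · exact tendsto_re_mul_inv_pow_sub_one_of_ne hW (mt (ha.pow_eq_one_iff_dvd _).mp hd)

lemma eventually_re_mul_logGenFun_lt (hx₀ : ‖x₀‖ < 1) (hX : Tendsto X l (𝓝 x₀))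
    (hW : Tendsto W l (𝓝[{w | 0 < w.re}] 0)) {k : ℕ} (hk : 0 < k) (ha : IsPrimitiveRoot a k)
    {M : ℝ} (hM : fk k x₀ ^ 2 < M) :
    ∀ᶠ p in l, (W p).re * (logGenFun (X p) (a * cexp (W p))).re < M := by
  refine mem_iff_ultrafilter.mpr fun g hg => ?_
  obtain ⟨ν, hν, -, hlim⟩ :=
    exists_tendsto_of_ultrafilter hx₀ (hX.mono_left hg) (hW.mono_left hg) hk ha
  refine hlim.eventually (gt_mem_nhds (lt_of_le_of_lt ?_ hM))
  rw [fk_sq, ← mul_div_assoc, ← Nat.cast_pow, ← ofReal_natCast, div_ofReal_re, Nat.cast_pow]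
  gcongr
  exact re_mul_le_reSqrtSq hν _

lemma norm_le_inv_of_tendsto_re_div [l.NeBot] (hW : Tendsto W l (𝓝[{w | 0 < w.re}] 0)) {B : ℝ}
    (hB : 0 < B) (hout : ∀ᶠ p in l, B * (W p).re ≤ |(W p).im|) {ν : ℂ}
    (hν : Tendsto (fun p => ((W p).re : ℂ) / W p) l (𝓝 ν)) : ‖ν‖ ≤ B⁻¹ := by
  refine le_of_tendsto hν.norm ?_
  filter_upwards [(tendsto_nhdsWithin_iff.mp hW).2, hout] with p hp hpB
  have hle : B * (W p).re ≤ ‖W p‖ := hpB.trans (abs_im_le_norm _)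
  have hpos : 0 < ‖W p‖ := lt_of_lt_of_le (mul_pos hB hp) hle
  rw [norm_div, norm_real, Real.norm_of_nonneg (le_of_lt hp), div_le_iff₀ hpos,
    le_inv_mul_iff₀ hB]
  exact hle

lemma eventually_re_mul_logGenFun_lt_of_le_abs_im (hx₀ : ‖x₀‖ < 1) (hX : Tendsto X l (𝓝 x₀))
    (hW : Tendsto W l (𝓝[{w | 0 < w.re}] 0)) {k : ℕ} (hk : 0 < k) (ha : IsPrimitiveRoot a k)
    {B M : ℝ} (hB : 0 < B) (hM : B⁻¹ * (‖dilog (x₀ ^ k)‖ / k ^ 2) < M) :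
    ∀ᶠ p in l, B * (W p).re ≤ |(W p).im| →
      (W p).re * (logGenFun (X p) (a * cexp (W p))).re < M := by
  refine mem_iff_ultrafilter.mpr fun g hg => ?_
  have hWg := hW.mono_left hg
  obtain ⟨ν, -, hν, hlim⟩ := exists_tendsto_of_ultrafilter hx₀ (hX.mono_left hg) hWg hk ha
  rcases g.em fun p => B * (W p).re ≤ |(W p).im| with hout | hin
  · refine (hlim.eventually (gt_mem_nhds (lt_of_le_of_lt ?_ hM))).mono fun p hp _ => hp
    refine (re_le_norm _).trans ?_
    rw [norm_mul, norm_div, norm_pow, norm_natCast]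
    gcongr
    exact norm_le_inv_of_tendsto_re_div hWg hB hout hν
  · exact hin.mono fun p hp h => absurd h hp

lemma IsDominant.exists_eventually_re_mul_logGenFun_lt {k : ℕ} (hdom : IsDominant k x₀)
    (hX : Tendsto X l (𝓝 x₀)) (ha : ‖a‖ = 1) (hW : Tendsto W l (𝓝[{w | 0 < w.re}] 0))
    (hak : ¬ IsPrimitiveRoot a k) :
    ∃ M < fk k x₀ ^ 2, ∀ᶠ p in l, (W p).re * (logGenFun (X p) (a * cexp (W p))).re < M := by
  by_cases hfin : IsOfFinOrder a
  · have hprim := IsPrimitiveRoot.orderOf a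
    obtain ⟨M, hM, hMk⟩ := exists_between <| pow_lt_pow_left₀
      (hdom.fk_lt _ hfin.orderOf_pos fun h => hak (h ▸ hprim)) (fk_nonneg _ _) two_ne_zero
    exact ⟨M, hMk, eventually_re_mul_logGenFun_lt hdom.norm_lt_one hX hW hfin.orderOf_pos hprim hM⟩
  · obtain ⟨M, hM, hMk⟩ := exists_between (pow_pos hdom.fk_pos 2)
    exact ⟨M, hMk, (tendsto_re_mul_logGenFun_of_infinite_order hdom.norm_lt_one hX ha hW
      hfin).eventually (gt_mem_nhds hM)⟩

end LocalGap

section GlobalGap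

/-- On the circle of radius `exp (-σ)`, the minor arcs for `k` consist of the angles at distance at
least `B σ` from the angles of the primitive `k`-th roots of unity. -/
def minorArcs (k : ℕ) (B σ : ℝ) : Set ℝ :=
  {φ | ∀ ψ ∈ Set.Icc (-Real.pi) Real.pi, IsPrimitiveRoot (cexp (ψ * I)) k → B * σ ≤ |φ - ψ|}

variable {k : ℕ} {x₀ : ℂ}

lemma IsDominant.exists_eventually_nhds_re_logGenFun_lt (hdom : IsDominant k x₀) {B : ℝ}
    (hB : 0 < B) (hBk : B⁻¹ * (‖dilog (x₀ ^ k)‖ / k ^ 2) < fk k x₀ ^ 2) {ψ : ℝ}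
    (hψ : ψ ∈ Set.Icc (-Real.pi) Real.pi) :
    ∃ M < fk k x₀ ^ 2, ∀ᶠ r : (ℝ × ℂ) × ℝ in (𝓝[>] 0 ×ˢ 𝓝 x₀) ×ˢ 𝓝 ψ,
      r.2 ∈ minorArcs k B r.1.1 →
        r.1.1 * (logGenFun r.1.2 (cexp (r.1.1 + r.2 * I))).re < M := by
  let l := (𝓝[>] (0 : ℝ) ×ˢ 𝓝 x₀) ×ˢ 𝓝 ψ
  let W : (ℝ × ℂ) × ℝ → ℂ := fun r => r.1.1 + (r.2 - ψ : ℝ) * I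
  have hX : Tendsto (fun r : (ℝ × ℂ) × ℝ => r.1.2) l (𝓝 x₀) := tendsto_snd.comp tendsto_fst
  have hσ : Tendsto (fun r : (ℝ × ℂ) × ℝ => r.1.1) l (𝓝[>] 0) := tendsto_fst.comp tendsto_fst
  have hW : Tendsto W l (𝓝[{w | 0 < w.re}] 0) := by
    obtain ⟨hσ0, hσpos⟩ := tendsto_nhdsWithin_iff.mp hσ
    have him : Tendsto (fun r : (ℝ × ℂ) × ℝ => r.2 - ψ) l (𝓝 0) := by
      simpa using (tendsto_snd : Tendsto Prod.snd l (𝓝 ψ)).sub_const ψ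
    refine tendsto_nhdsWithin_iff.mpr ⟨?_, by simpa [W] using hσpos⟩
    simpa [W] using (tendsto_ofReal_iff.mpr hσ0).add ((tendsto_ofReal_iff.mpr him).mul_const I)
  have hu (r : (ℝ × ℂ) × ℝ) : cexp (r.1.1 + r.2 * I) = cexp (ψ * I) * cexp (W r) := by
    rw [← Complex.exp_add]
    congr 1
    simp only [W]
    push_cast
    ring
  have hre (r : (ℝ × ℂ) × ℝ) : (W r).re = r.1.1 := by simp [W]
  have him (r : (ℝ × ℂ) × ℝ) : (W r).im = r.2 - ψ := by simp [W]
  by_cases hprim : IsPrimitiveRoot (cexp (ψ * I)) k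
  · obtain ⟨M, hM, hMk⟩ := exists_between hBk
    refine ⟨M, hMk, ?_⟩
    filter_upwards [eventually_re_mul_logGenFun_lt_of_le_abs_im hdom.norm_lt_one hX hW
      (pos_of_fk_pos hdom.fk_pos) hprim hB hM] with r hr hminor
    rw [hu, ← hre]
    exact hr (by simpa only [hre, him] using hminor ψ hψ hprim)
  · obtain ⟨M, hMk, hM⟩ := hdom.exists_eventually_re_mul_logGenFun_lt hX
      (norm_exp_ofReal_mul_I ψ) hW hprim
    exact ⟨M, hMk, hM.mono fun r hr _ => by rwa [hu, ← hre]⟩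

theorem IsDominant.exists_eventually_minorArcs_re_logGenFun_lt (hdom : IsDominant k x₀) {B : ℝ}
    (hB : 0 < B) (hBk : B⁻¹ * (‖dilog (x₀ ^ k)‖ / k ^ 2) < fk k x₀ ^ 2) :
    ∃ M < fk k x₀ ^ 2, ∀ᶠ q : ℝ × ℂ in 𝓝[>] 0 ×ˢ 𝓝 x₀, ∀ φ ∈ Set.Icc (-Real.pi) Real.pi,
      φ ∈ minorArcs k B q.1 → q.1 * (logGenFun q.2 (cexp (q.1 + φ * I))).re < M := by
  refine (isCompact_Icc (a := -Real.pi) (b := Real.pi)).induction_on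
    (p := fun S => ∃ M < fk k x₀ ^ 2, ∀ᶠ q : ℝ × ℂ in 𝓝[>] 0 ×ˢ 𝓝 x₀, ∀ φ ∈ S,
      φ ∈ minorArcs k B q.1 → q.1 * (logGenFun q.2 (cexp (q.1 + φ * I))).re < M) ?_ ?_ ?_ ?_
  · exact ⟨0, pow_pos hdom.fk_pos 2, by simp⟩
  · rintro s t hst ⟨M, hM, h⟩
    exact ⟨M, hM, h.mono fun q hq φ hφ => hq φ (hst hφ)⟩
  · rintro s t ⟨M, hM, h⟩ ⟨M', hM', h'⟩
    refine ⟨max M M', max_lt hM hM', ?_⟩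
    filter_upwards [h, h'] with q hq hq' φ hφ hminor
    exact hφ.elim (fun hφ => lt_max_of_lt_left (hq φ hφ hminor))
      fun hφ => lt_max_of_lt_right (hq' φ hφ hminor)
  · intro ψ hψ
    obtain ⟨M, hM, h⟩ := hdom.exists_eventually_nhds_re_logGenFun_lt hB hBk hψ
    obtain ⟨P, hP, Q, hQ, hPQ⟩ := eventually_prod_iff.mp h
    exact ⟨{φ | Q φ}, mem_nhdsWithin_of_mem_nhds hQ, M, hM,
      hP.mono fun q hq φ hφ hminor => hPQ hq hφ hminor⟩

end GlobalGap

/-! ### Expansion at the roots of unity -/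

/-- The sector `|Im w| ≤ B Re w` of the right half-plane, in which the approach to a root of unity
is nontangential. -/
def sector (B : ℝ) : Set ℂ := {w | 0 < w.re ∧ |w.im| ≤ B * w.re}

/-- The polar part at `z = 0` of `(b * exp z - 1)⁻¹`. -/
noncomputable def polarPart (b z : ℂ) : ℂ := if b = 1 then z⁻¹ else 0

/-- The constant term at `z = 0` of `(b * exp z - 1)⁻¹`. -/
noncomputable def constCoeff (b : ℂ) : ℂ := if b = 1 then -1 / 2 else (b - 1)⁻¹

/-- The constant term in the expansion of `logGenFun x (a * exp w)` as `w → 0` in a sector. -/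
noncomputable def constTerm (a x : ℂ) : ℂ :=
  ∑' j : ℕ, x ^ (j + 1) / ((j : ℂ) + 1) * constCoeff (a ^ (j + 1))

lemma tendsto_inv_exp_sub_one_sub_inv :
    Tendsto (fun z : ℂ => (cexp z - 1)⁻¹ - z⁻¹) (𝓝[≠] 0) (𝓝 (-1 / 2)) := by
  have hrem := (Complex.exp_sub_sum_range_succ_isLittleO_pow 2).tendsto_div_nhds_zero.mono_left
    (nhdsWithin_le_nhds (s := {0}ᶜ))
  have hlim := ((hrem.add_const (1 / 2)).mul tendsto_mul_inv_exp_sub_one).neg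
  rw [zero_add, mul_one, ← neg_div] at hlim
  refine hlim.congr' ?_
  filter_upwards [tendsto_mul_inv_exp_sub_one.eventually_ne one_ne_zero, self_mem_nhdsWithin]
    with z hz hz0
  have hz0 : z ≠ 0 := hz0
  have hexp : cexp z - 1 ≠ 0 := inv_eq_zero.not.mp (right_ne_zero_of_mul hz)
  simp only [Finset.sum_range_succ, Finset.sum_range_zero, Nat.factorial]
  push_cast
  field_simp
  ring

lemma tendsto_inv_mul_exp_sub_one_sub_polarPart (b : ℂ) :
    Tendsto (fun z => (b * cexp z - 1)⁻¹ - polarPart b z) (𝓝[≠] 0) (𝓝 (constCoeff b)) := by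
  by_cases hb : b = 1
  · simpa only [hb, polarPart, constCoeff, if_true, one_mul] using tendsto_inv_exp_sub_one_sub_inv
  · have hcont : ContinuousAt (fun z : ℂ => (b * cexp z - 1)⁻¹) 0 :=
      ContinuousAt.inv₀ (by fun_prop) (by simpa [sub_eq_zero] using hb)
    simpa [polarPart, constCoeff, hb] using hcont.tendsto.mono_left nhdsWithin_le_nhds

lemma ne_zero_of_mem_sector {B : ℝ} {z : ℂ} (hz : z ∈ sector B) : z ≠ 0 := by
  rintro rfl
  simpa using hz.1

lemma ofReal_mul_mem_sector {B r : ℝ} (hr : 0 < r) {z : ℂ} (hz : z ∈ sector B) :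
    (r : ℂ) * z ∈ sector B := by
  refine ⟨by rw [re_ofReal_mul]; exact mul_pos hr hz.1, ?_⟩
  rw [re_ofReal_mul, im_ofReal_mul, abs_mul, abs_of_pos hr, mul_left_comm]
  exact mul_le_mul_of_nonneg_left hz.2 hr.le

lemma natCast_add_one_mul_mem_sector {B : ℝ} {z : ℂ} (hz : z ∈ sector B) (j : ℕ) :
    ((j : ℂ) + 1) * z ∈ sector B := by
  exact_mod_cast ofReal_mul_mem_sector j.cast_add_one_pos hz

lemma norm_le_mul_re_of_mem_sector {B : ℝ} {z : ℂ} (hz : z ∈ sector B) :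
    ‖z‖ ≤ (1 + B) * z.re := by
  have := norm_le_abs_re_add_abs_im z
  rw [abs_of_pos hz.1] at this
  linarith [hz.2]

lemma re_le_norm_mul_exp_sub_one {b z : ℂ} (hb : ‖b‖ = 1) (hz : 0 < z.re) :
    z.re ≤ ‖b * cexp z - 1‖ := by
  have hle := norm_sub_one_le_norm_pow_sub_one (one_lt_norm_mul_exp hb hz) 0
  rw [norm_mul, hb, one_mul, Complex.norm_exp, zero_add, pow_one] at hle
  linarith [Real.add_one_le_exp z.re]

lemma norm_inv_mul_exp_sub_one_sub_polarPart_le {B : ℝ} {b z : ℂ} (hb : ‖b‖ = 1)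
    (hz : z ∈ sector B) : ‖(b * cexp z - 1)⁻¹ - polarPart b z‖ ≤ (2 + B) / ‖z‖ := by
  have hz0 : 0 < ‖z‖ := norm_pos_iff.mpr (ne_zero_of_mem_sector hz)
  have hB : 0 < 1 + B := pos_of_mul_pos_left
    (hz0.trans_le (norm_le_mul_re_of_mem_sector hz)) hz.1.le
  have hinv : ‖(b * cexp z - 1)⁻¹‖ ≤ (1 + B) / ‖z‖ := by
    have hre := re_le_norm_mul_exp_sub_one hb hz.1
    rw [norm_inv, inv_le_comm₀ (hz.1.trans_le hre) (by positivity), inv_div, div_le_iff₀' hB]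
    exact (norm_le_mul_re_of_mem_sector hz).trans (by gcongr)
  have hpolar : ‖polarPart b z‖ ≤ 1 / ‖z‖ := by
    rw [polarPart]
    split_ifs
    · simp
    · simp
  calc ‖(b * cexp z - 1)⁻¹ - polarPart b z‖ ≤ (1 + B) / ‖z‖ + 1 / ‖z‖ :=
        (norm_sub_le _ _).trans (add_le_add hinv hpolar)
    _ = (2 + B) / ‖z‖ := by ring

lemma exists_norm_inv_mul_exp_sub_one_sub_polarPart_le (B : ℝ) {b : ℂ} (hb : ‖b‖ = 1) :
    ∃ C, ∀ z ∈ sector B, ‖(b * cexp z - 1)⁻¹ - polarPart b z‖ ≤ C := by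
  obtain ⟨r, hr, hnear⟩ := Metric.eventually_nhds_iff.mp (eventually_nhdsWithin_iff.mp
    ((tendsto_inv_mul_exp_sub_one_sub_polarPart b).norm.eventually
      (gt_mem_nhds (lt_add_one ‖constCoeff b‖))))
  refine ⟨max (‖constCoeff b‖ + 1) ((2 + B) / r), fun z hz => ?_⟩
  rcases lt_or_ge ‖z‖ r with hzr | hzr
  · exact le_max_of_le_left (hnear (by simpa using hzr) (ne_zero_of_mem_sector hz)).le
  · have hle := norm_inv_mul_exp_sub_one_sub_polarPart_le hb hz
    have hB : 0 ≤ 2 + B := by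
      have := (norm_nonneg _).trans hle
      by_contra! hneg
      exact absurd this (not_le.mpr (div_neg_of_neg_of_pos hneg (hr.trans_le hzr)))
    exact le_max_of_le_right (hle.trans (by gcongr))

lemma exists_norm_inv_pow_mul_exp_sub_one_sub_polarPart_le (B : ℝ) {a : ℂ}
    (ha : IsOfFinOrder a) :
    ∃ C, ∀ j : ℕ, ∀ z ∈ sector B, ‖(a ^ j * cexp z - 1)⁻¹ - polarPart (a ^ j) z‖ ≤ C := by
  have hnorm (j : ℕ) : ‖a ^ j‖ = 1 := by rw [norm_pow, ha.norm_eq_one, one_pow]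
  choose C hC using fun j => exists_norm_inv_mul_exp_sub_one_sub_polarPart_le B (hnorm j)
  obtain ⟨M, hM⟩ := ((Set.finite_Iio (orderOf a)).image C).bddAbove
  refine ⟨M, fun j z hz => ?_⟩
  rw [← pow_mod_orderOf]
  exact (hC _ z hz).trans (hM ⟨j % orderOf a, Nat.mod_lt _ ha.orderOf_pos, rfl⟩)

section SectorLimit

variable {α : Type*} {l : Filter α} {X W : α → ℂ} {x₀ a : ℂ} {B : ℝ}

lemma tendsto_inv_pow_sub_one_sub_polarPart (hW : Tendsto W l (𝓝[sector B] 0)) (j : ℕ) :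
    Tendsto (fun p => ((a * cexp (W p)) ^ (j + 1) - 1)⁻¹ -
      polarPart (a ^ (j + 1)) (((j : ℂ) + 1) * W p)) l (𝓝 (constCoeff (a ^ (j + 1)))) := by
  obtain ⟨hW0, hWsec⟩ := tendsto_nhdsWithin_iff.mp hW
  have hz : Tendsto (fun p => ((j : ℂ) + 1) * W p) l (𝓝[≠] 0) :=
    tendsto_nhdsWithin_iff.mpr ⟨by simpa using hW0.const_mul ((j : ℂ) + 1),
      hWsec.mono fun p hp => ne_zero_of_mem_sector (natCast_add_one_mul_mem_sector hp j)⟩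
  refine ((tendsto_inv_mul_exp_sub_one_sub_polarPart (a ^ (j + 1))).comp hz).congr fun p => ?_
  rw [Function.comp_apply, mul_pow, ← Complex.exp_nat_mul, Nat.cast_add_one]

lemma logGenFun_sub_dilog_div_eq_tsum {k : ℕ} (hk : 0 < k) (ha : IsPrimitiveRoot a k) {x w : ℂ}
    (hx : ‖x‖ < 1) (hw : 0 < w.re) :
    logGenFun x (a * cexp w) - dilog (x ^ k) / (k : ℂ) ^ 2 / w =
      ∑' j : ℕ, x ^ (j + 1) / ((j : ℂ) + 1) * (((a * cexp w) ^ (j + 1) - 1)⁻¹ -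
        polarPart (a ^ (j + 1)) (((j : ℂ) + 1) * w)) := by
  have hpolar (j : ℕ) : polarPart (a ^ (j + 1)) (((j : ℂ) + 1) * w) =
      if k ∣ j + 1 then w⁻¹ / ((j : ℂ) + 1) else 0 := by
    simp only [polarPart, ha.pow_eq_one_iff_dvd, mul_inv_rev, div_eq_mul_inv]
  have hbound (j : ℕ) : ‖if k ∣ j + 1 then w⁻¹ / ((j : ℂ) + 1) else 0‖ ≤ ‖w⁻¹‖ := by
    split_ifs
    · rw [norm_div, norm_natCast_add_one]
      exact div_le_self (norm_nonneg _) (le_add_of_nonneg_left j.cast_nonneg)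
    · simp
  have hu := one_lt_norm_mul_exp (ha.norm'_eq_one hk.ne') hw
  have htsum := (summable_pow_div_mul hx (norm_inv_pow_sub_one_le hu)).tsum_sub
    (summable_pow_div_mul hx hbound)
  simp only [hpolar, mul_sub]
  rw [htsum, tsum_dvd_eq_dilog hk, logGenFun]
  ring

theorem tendsto_logGenFun_sub_dilog_div {k : ℕ} (hk : 0 < k) (ha : IsPrimitiveRoot a k)
    (hx₀ : ‖x₀‖ < 1) (hX : Tendsto X l (𝓝 x₀)) (hW : Tendsto W l (𝓝[sector B] 0)) :
    Tendsto (fun p => logGenFun (X p) (a * cexp (W p)) - dilog (X p ^ k) / (k : ℂ) ^ 2 / W p) l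
      (𝓝 (constTerm a x₀)) := by
  have hWsec := (tendsto_nhdsWithin_iff.mp hW).2
  have hfin : IsOfFinOrder a := isOfFinOrder_iff_pow_eq_one.mpr ⟨k, hk, ha.pow_eq_one⟩
  obtain ⟨C, hC⟩ := exists_norm_inv_pow_mul_exp_sub_one_sub_polarPart_le B hfin
  refine (tendsto_tsum_pow_div_mul hx₀ hX (tendsto_inv_pow_sub_one_sub_polarPart hW) (C := C)
    ?_).congr' ?_
  · filter_upwards [hWsec] with p hp j
    rw [mul_pow, ← Complex.exp_nat_mul, Nat.cast_add_one]
    exact hC _ _ (natCast_add_one_mul_mem_sector hp j)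
  · filter_upwards [hWsec, hX.norm.eventually (gt_mem_nhds hx₀)] with p hp hXp
    exact (logGenFun_sub_dilog_div_eq_tsum hk ha hXp hp.1).symm

end SectorLimit

lemma constCoeff_of_pow_three_eq_one {b : ℂ} (hb : b ^ 3 = 1) :
    constCoeff b = -1 / 2 + (b⁻¹ - b) / 6 := by
  have hb0 : b ≠ 0 := by
    rintro rfl
    simp at hb
  rw [constCoeff]
  split_ifs with hb1
  · simp [hb1]
  · have hb1' : b - 1 ≠ 0 := sub_ne_zero.mpr hb1
    have hcyc : b ^ 2 + b + 1 = 0 :=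
      (mul_eq_zero.mp (by linear_combination hb : (b - 1) * (b ^ 2 + b + 1) = 0)).resolve_left hb1'
    field_simp
    linear_combination 2 * (b + 1) * hcyc

lemma constTerm_eq_log {a x : ℂ} (ha : a ^ 3 = 1) (hx : ‖x‖ < 1) :
    constTerm a x = Complex.log (1 - x) / 2 +
      (Complex.log (1 - a * x) - Complex.log (1 - a⁻¹ * x)) / 6 := by
  have hlog {b : ℂ} (hb : ‖b‖ = 1) : HasSum (fun j : ℕ => (b * x) ^ (j + 1) / ((j : ℂ) + 1))
      (-Complex.log (1 - b * x)) := hasSum_neg_log_one_sub (by rwa [norm_mul, hb, one_mul])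
  have hnorm : ‖a‖ = 1 := norm_eq_one_of_pow_eq_one ha three_ne_zero
  have hsum := ((hlog norm_one).mul_left (-1 / 2)).add
    (((hlog (b := a⁻¹) (by rw [norm_inv, hnorm, inv_one])).sub (hlog hnorm)).mul_left (1 / 6))
  rw [constTerm]
  refine (HasSum.tsum_eq (hsum.congr_fun ?_)).trans (by ring_nf)
  intro j
  rw [constCoeff_of_pow_three_eq_one (by rw [← pow_mul, mul_comm, pow_mul, ha, one_pow])]
  simp only [mul_pow, inv_pow, one_pow]
  ring

lemma norm_one_sub_mul_ne {a x : ℂ} (ha : a.im ≠ 0) (hx : x.im ≠ 0) :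
    ‖1 - a * x‖ ≠ ‖1 - (starRingEnd ℂ) a * x‖ := by
  intro heq
  have hsq : normSq (1 - a * x) = normSq (1 - (starRingEnd ℂ) a * x) := by
    rw [normSq_eq_norm_sq, normSq_eq_norm_sq, heq]
  simp only [normSq_apply, sub_re, sub_im, mul_re, mul_im, one_re, one_im, conj_re, conj_im] at hsq
  exact mul_ne_zero ha hx (by linarith)

lemma im_ne_zero_of_isPrimitiveRoot_three {a : ℂ} (ha : IsPrimitiveRoot a 3) : a.im ≠ 0 := by
  intro him
  have hre : a = (a.re : ℂ) := Complex.ext rfl (by simpa using him)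
  have hpow := ha.pow_eq_one
  rw [hre] at hpow
  norm_cast at hpow
  have hone : a.re = 1 := by nlinarith [sq_nonneg (a.re + 1 / 2)]
  exact ha.ne_one (by norm_num) (by rw [hre, hone, ofReal_one])

theorem constTerm_re_ne {a x : ℂ} (ha : IsPrimitiveRoot a 3) (hx : ‖x‖ < 1) (him : x.im ≠ 0) :
    (constTerm a x).re ≠ (constTerm a⁻¹ x).re := by
  have hnorm : ‖a‖ = 1 := ha.norm'_eq_one three_ne_zero
  have hpos {b : ℂ} (hb : ‖b‖ = 1) : 0 < ‖1 - b * x‖ :=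
    norm_pos_iff.mpr <| sub_ne_zero.mpr fun h => by
      have := congrArg norm h
      rw [norm_one, norm_mul, hb, one_mul] at this
      exact hx.ne' this
  intro heq
  rw [constTerm_eq_log ha.pow_eq_one hx, constTerm_eq_log ha.inv.pow_eq_one hx, inv_inv] at heq
  simp only [add_re, div_ofNat_re, sub_re, log_re] at heq
  refine norm_one_sub_mul_ne (im_ne_zero_of_isPrimitiveRoot_three ha) him ?_
  rw [← inv_eq_conj hnorm]
  exact Real.log_injOn_pos (hpos hnorm) (hpos (by rw [norm_inv, hnorm, inv_one])) (by linarith)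

/-! ### The saddle point integral -/

section Saddle

lemma dilog_zero : dilog 0 = 0 := by
  simp [dilog]

lemma hasDerivAt_dilog {z : ℂ} (hz : ‖z‖ < 1) :
    HasDerivAt dilog (∑' n : ℕ, z ^ n / ((n : ℂ) + 1)) z := by
  obtain ⟨ρ, h1, h2⟩ := exists_between hz
  have hρ : 0 < ρ := (norm_nonneg z).trans_lt h1
  refine hasDerivAt_tsum_of_isPreconnected (u := fun n : ℕ => ρ ^ n)
    (g := fun (n : ℕ) (z : ℂ) => z ^ (n + 1) / ((n : ℂ) + 1) ^ 2)
    (g' := fun (n : ℕ) (z : ℂ) => z ^ n / ((n : ℂ) + 1)) (t := Metric.ball 0 ρ) (y₀ := 0)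
    (summable_geometric_of_lt_one hρ.le h2) Metric.isOpen_ball
    (convex_ball _ _).isPreconnected (fun n y _ => ?_) (fun n y hy => ?_)
    (Metric.mem_ball_self hρ) (by simp) (by simpa using h1)
  · refine ((hasDerivAt_pow (n + 1) y).div_const (((n : ℂ) + 1) ^ 2)).congr_deriv ?_
    have := Nat.cast_add_one_ne_zero (R := ℂ) n
    push_cast
    field_simp
  · rw [norm_div, norm_pow, norm_natCast_add_one]
    refine (div_le_self (by positivity) (le_add_of_nonneg_left n.cast_nonneg)).trans ?_
    exact pow_le_pow_left₀ (norm_nonneg _) (mem_ball_zero_iff.mp hy).le n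

lemma analyticOnNhd_dilog_pow {k : ℕ} (hk : 0 < k) :
    AnalyticOnNhd ℂ (fun x => dilog (x ^ k)) (Metric.ball 0 1) := by
  have hdilog : AnalyticOnNhd ℂ dilog (Metric.ball 0 1) :=
    DifferentiableOn.analyticOnNhd (fun z hz => (hasDerivAt_dilog
      (mem_ball_zero_iff.mp hz)).differentiableAt.differentiableWithinAt) Metric.isOpen_ball
  refine hdilog.comp (fun x _ => analyticAt_id.pow k) fun x hx => ?_
  rw [mem_ball_zero_iff, norm_pow]
  exact pow_lt_one₀ (norm_nonneg _) (mem_ball_zero_iff.mp hx) hk.ne'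

/-- The saddle point `√(Li₂(xᵏ)) / k`, whose real part is `fk k x`. -/
noncomputable def saddle (k : ℕ) (x : ℂ) : ℂ :=
  ((1 / (k : ℝ) : ℝ) : ℂ) * dilog (x ^ k) ^ (1 / 2 : ℂ)

lemma saddle_re (k : ℕ) (x : ℂ) : (saddle k x).re = fk k x := re_ofReal_mul _ _

lemma saddle_sq (k : ℕ) (x : ℂ) : saddle k x ^ 2 = dilog (x ^ k) / (k : ℂ) ^ 2 := by
  have hsq : (dilog (x ^ k) ^ (1 / 2 : ℂ)) ^ 2 = dilog (x ^ k) := by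
    simp
  rw [saddle, mul_pow, hsq]
  push_cast
  ring

lemma dilog_mem_slitPlane_of_fk_pos {k : ℕ} {x : ℂ} (h : 0 < fk k x) :
    dilog (x ^ k) ∈ slitPlane := by
  rw [fk_eq_sqrt_reSqrtSq] at h
  have hpos := Real.sqrt_pos.mp (pos_of_mul_pos_right h (by positivity))
  rw [mem_slitPlane_iff]
  by_contra! hneg
  obtain ⟨hre, him⟩ := hneg
  rw [reSqrtSq, ← abs_re_eq_norm.mpr him, abs_of_nonpos hre] at hpos
  linarith

lemma analyticAt_saddle {k : ℕ} {x : ℂ} (hx : ‖x‖ < 1) (h : 0 < fk k x) :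
    AnalyticAt ℂ (saddle k) x :=
  analyticAt_const.mul <| (analyticOnNhd_dilog_pow (pos_of_fk_pos h) x
    (mem_ball_zero_iff.mpr hx)).cpow analyticAt_const (dilog_mem_slitPlane_of_fk_pos h)

end Saddle

section Window

/-- The scale `n ^ (1 / 4)`; the saddle points lie at distance of order `(quarticRoot n)⁻¹ ^ 2` from
the roots of unity and have width of order `(quarticRoot n)⁻¹ ^ 3`. -/
noncomputable def quarticRoot (n : ℕ) : ℝ := √√n

lemma quarticRoot_sq (n : ℕ) : quarticRoot n ^ 2 = √n := Real.sq_sqrt (Real.sqrt_nonneg _)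

lemma quarticRoot_nonneg (n : ℕ) : 0 ≤ quarticRoot n := Real.sqrt_nonneg _

lemma quarticRoot_pow_four (n : ℕ) : quarticRoot n ^ 4 = n := by
  rw [show quarticRoot n ^ 4 = (quarticRoot n ^ 2) ^ 2 by ring, quarticRoot_sq,
    Real.sq_sqrt n.cast_nonneg]

lemma quarticRoot_pos {n : ℕ} (hn : 1 ≤ n) : 0 < quarticRoot n := by
  have : (0 : ℝ) < n := Nat.cast_pos.mpr hn
  rw [quarticRoot]
  positivity

lemma tendsto_quarticRoot : Tendsto quarticRoot atTop atTop :=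
  Real.tendsto_sqrt_atTop.comp (Real.tendsto_sqrt_atTop.comp tendsto_natCast_atTop_atTop)

/-- The point of the vertical line through `s` with parameter `v`, at the scale on which the saddle
point `s` has width `1`. -/
noncomputable def saddleLine (s : ℂ) (n : ℕ) (v : ℝ) : ℂ := s + (v / quarticRoot n : ℝ) * I

/-- The integrand near the root of unity `a` in the variable `v` of `saddleLine`, divided by its
size at the saddle point. -/
noncomputable def windowProfile (k : ℕ) (a : ℂ) (n : ℕ) (x : ℂ) (v : ℝ) : ℂ :=
  cexp (logGenFun x (a * cexp (saddleLine (saddle k x) n v / (quarticRoot n : ℂ) ^ 2)) -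
    dilog (x ^ k) / (k : ℂ) ^ 2 / (saddleLine (saddle k x) n v / (quarticRoot n : ℂ) ^ 2) -
    v ^ 2 / saddleLine (saddle k x) n v)

lemma saddleLine_re (s : ℂ) (n : ℕ) (v : ℝ) : (saddleLine s n v).re = s.re := by
  simp [saddleLine]

lemma saddleLine_im (s : ℂ) (n : ℕ) (v : ℝ) : (saddleLine s n v).im = s.im + v / quarticRoot n := by
  rw [saddleLine, add_im, im_ofReal_mul, I_im, mul_one]

lemma div_quarticRoot_sq_mem_sector {B : ℝ} {n : ℕ} (hn : 1 ≤ n) {z : ℂ} (hz : z ∈ sector B) :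
    z / (quarticRoot n : ℂ) ^ 2 ∈ sector B := by
  have := ofReal_mul_mem_sector (inv_pos.mpr (pow_pos (quarticRoot_pos hn) 2)) hz
  rwa [ofReal_inv, ofReal_pow, ← div_eq_inv_mul] at this

lemma saddleLine_mem_sector_iff {B : ℝ} {s : ℂ} (hs : 0 < s.re) {n : ℕ} (hn : 1 ≤ n) (v : ℝ) :
    saddleLine s n v ∈ sector B ↔
      v ∈ Set.Icc (quarticRoot n * (-(B * s.re) - s.im)) (quarticRoot n * (B * s.re - s.im)) := by
  have hτ := quarticRoot_pos hn
  rw [sector, Set.mem_ofPred_eq, saddleLine_re, saddleLine_im, abs_le, Set.mem_Icc,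
    ← le_div_iff₀' hτ, ← div_le_iff₀' hτ]
  constructor
  · rintro ⟨-, h1, h2⟩
    constructor <;> linarith
  · rintro ⟨h1, h2⟩
    refine ⟨hs, ?_, ?_⟩ <;> linarith

lemma continuous_integrand (n : ℕ) {x : ℂ} (hx : ‖x‖ < 1) {σ : ℝ} (hσ : 0 < σ) :
    Continuous (integrand n x σ) := by
  have hu (φ : ℝ) : 1 < ‖cexp (σ + φ * I)‖ := one_lt_norm_exp_ofReal_add_mul_I hσ φ
  have hlog : Continuous fun φ : ℝ => logGenFun x (cexp (σ + φ * I)) := by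
    refine continuous_iff_continuousAt.mpr fun φ =>
      tendsto_tsum_pow_div_mul hx tendsto_const_nhds (C := (Real.exp σ - 1)⁻¹) (fun j => ?_) ?_
    · have hne := (sub_pos.mpr (hu φ)).trans_le (norm_sub_one_le_norm_pow_sub_one (hu φ) j)
      exact Tendsto.inv₀ (Continuous.tendsto (by fun_prop) φ) (norm_pos_iff.mp hne)
    · refine Eventually.of_forall fun ψ j => ?_
      rw [← norm_exp_ofReal_add_mul_I σ ψ]
      exact norm_inv_pow_sub_one_le (hu ψ) j
  unfold integrand
  fun_prop

/-- The normalising factor of the integral over the window around the angle `ψ`. -/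
noncomputable def windowNormalizer (k n : ℕ) (x : ℂ) (ψ : ℝ) : ℂ :=
  cexp (-(2 * quarticRoot n ^ 2 * saddle k x) - n * (ψ * I))

lemma windowNormalizer_mul_integrand {k n : ℕ} (hn : 1 ≤ n) {x : ℂ} (hx : 0 < fk k x) (ψ v : ℝ) :
    windowNormalizer k n x ψ * integrand n x (fk k x / quarticRoot n ^ 2)
      ((quarticRoot n ^ 3)⁻¹ * v + (ψ + (saddle k x).im / quarticRoot n ^ 2)) =
      windowProfile k (cexp (ψ * I)) n x v := by
  have hτ : (quarticRoot n : ℂ) ≠ 0 := ofReal_ne_zero.mpr (quarticRoot_pos hn).ne'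
  have hn4 : (n : ℂ) = (quarticRoot n : ℂ) ^ 4 := by exact_mod_cast (quarticRoot_pow_four n).symm
  set ζ := saddleLine (saddle k x) n v with hζ
  have hζ0 : ζ ≠ 0 := fun h => hx.ne' (by rw [← saddle_re, ← saddleLine_re _ n v, ← hζ, h, zero_re])
  have hpoint : ((fk k x / quarticRoot n ^ 2 : ℝ) : ℂ) + (((quarticRoot n ^ 3)⁻¹ * v +
      (ψ + (saddle k x).im / quarticRoot n ^ 2) : ℝ) : ℂ) * I =
        ψ * I + ζ / (quarticRoot n : ℂ) ^ 2 := by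
    rw [hζ, saddleLine, ← re_add_im (saddle k x), saddle_re]
    push_cast
    field_simp
    simp
    ring
  have hv : (v : ℂ) ^ 2 = -((ζ - saddle k x) * quarticRoot n) ^ 2 := by
    rw [hζ, saddleLine, add_sub_cancel_left, ofReal_div, mul_right_comm, div_mul_cancel₀ _ hτ,
      mul_pow, I_sq]
    ring
  rw [windowNormalizer, integrand, windowProfile, hpoint, ← hζ, ← Complex.exp_add,
    ← Complex.exp_add, ← saddle_sq, hv, hn4]
  congr 1
  field_simp
  ring

end Window

section WindowLimit

variable {k : ℕ} {x₀ : ℂ} {B : ℝ}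

lemma inv_le_inv_re_of_mem_sector {z : ℂ} (hz : z ∈ sector B) :
    ((1 + B) ^ 2 * z.re)⁻¹ ≤ (z⁻¹).re := by
  have hz0 : 0 < normSq z := normSq_pos.mpr (ne_zero_of_mem_sector hz)
  have hre : 0 < z.re := hz.1
  rw [inv_re, inv_eq_one_div]
  refine (one_div_le_one_div_of_le (div_pos hz0 hre) ?_).trans_eq (one_div_div _ _)
  rw [div_le_iff₀ hre, normSq_eq_norm_sq, mul_assoc, ← sq, ← mul_pow]
  exact pow_le_pow_left₀ (norm_nonneg z) (norm_le_mul_re_of_mem_sector hz) 2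

lemma tendsto_saddle_snd (hx₀ : ‖x₀‖ < 1) (h : 0 < fk k x₀) :
    Tendsto (fun p : ℕ × ℂ => saddle k p.2) (atTop ×ˢ 𝓝 x₀) (𝓝 (saddle k x₀)) :=
  (analyticAt_saddle hx₀ h).continuousAt.tendsto.comp tendsto_snd

lemma tendsto_fk_snd (hx₀ : ‖x₀‖ < 1) (h : 0 < fk k x₀) :
    Tendsto (fun p : ℕ × ℂ => fk k p.2) (atTop ×ˢ 𝓝 x₀) (𝓝 (fk k x₀)) := by
  simpa only [saddle_re, Function.comp_def] using
    (continuous_re.tendsto _).comp (tendsto_saddle_snd hx₀ h)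

lemma tendsto_saddleLine (hx₀ : ‖x₀‖ < 1) (h : 0 < fk k x₀) (v : ℝ) :
    Tendsto (fun p : ℕ × ℂ => saddleLine (saddle k p.2) p.1 v) (atTop ×ˢ 𝓝 x₀)
      (𝓝 (saddle k x₀)) := by
  have hdiv : Tendsto (fun p : ℕ × ℂ => ((v / quarticRoot p.1 : ℝ) : ℂ)) (atTop ×ˢ 𝓝 x₀)
      (𝓝 ((0 : ℝ) : ℂ)) :=
    (continuous_ofReal.tendsto 0).comp ((tendsto_quarticRoot.comp tendsto_fst).const_div_atTop v)
  simpa only [saddleLine, ofReal_zero, zero_mul, add_zero] using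
    (tendsto_saddle_snd hx₀ h).add (hdiv.mul_const I)

lemma eventually_saddleLine_mem_sector (hx₀ : ‖x₀‖ < 1) (h : 0 < fk k x₀)
    (hB : |(saddle k x₀).im| < B * fk k x₀) (v : ℝ) :
    ∀ᶠ p : ℕ × ℂ in atTop ×ˢ 𝓝 x₀, saddleLine (saddle k p.2) p.1 v ∈ sector B := by
  rw [← saddle_re] at h hB
  have hopen : IsOpen {w : ℂ | 0 < w.re ∧ |w.im| < B * w.re} :=
    (isOpen_lt continuous_const continuous_re).inter
      (isOpen_lt continuous_im.abs (continuous_re.const_mul B))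
  filter_upwards [(tendsto_saddleLine hx₀ (saddle_re k x₀ ▸ h) v).eventually
    (hopen.mem_nhds ⟨h, hB⟩)] with p hp
  exact ⟨hp.1, hp.2.le⟩

lemma tendsto_saddleLine_div (hx₀ : ‖x₀‖ < 1) (h : 0 < fk k x₀) (B : ℝ) :
    Tendsto (fun q : (ℕ × ℂ) × ℝ =>
        saddleLine (saddle k q.1.2) q.1.1 q.2 / (quarticRoot q.1.1 : ℂ) ^ 2)
      (((atTop ×ˢ 𝓝 x₀) ×ˢ ⊤) ⊓ 𝓟 {q | saddleLine (saddle k q.1.2) q.1.1 q.2 ∈ sector B})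
      (𝓝[sector B] 0) := by
  set L := ((atTop ×ˢ 𝓝 x₀) ×ˢ ⊤ : Filter ((ℕ × ℂ) × ℝ)) ⊓
    𝓟 {q | saddleLine (saddle k q.1.2) q.1.1 q.2 ∈ sector B}
  have hfst : Tendsto Prod.fst L (atTop ×ˢ 𝓝 x₀) := tendsto_fst.mono_left inf_le_left
  have hmem : ∀ᶠ q in L, saddleLine (saddle k q.1.2) q.1.1 q.2 ∈ sector B :=
    mem_inf_of_right (mem_principal_self _)
  have hτ : Tendsto (fun q : (ℕ × ℂ) × ℝ => quarticRoot q.1.1 ^ 2) L atTop :=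
    (tendsto_pow_atTop two_ne_zero).comp (tendsto_quarticRoot.comp (tendsto_fst.comp hfst))
  have hbound : Tendsto (fun q : (ℕ × ℂ) × ℝ => (1 + B) * fk k q.1.2 / quarticRoot q.1.1 ^ 2) L
      (𝓝 0) := (((tendsto_fk_snd hx₀ h).comp hfst).const_mul (1 + B)).div_atTop hτ
  refine tendsto_nhdsWithin_iff.mpr ⟨squeeze_zero_norm' ?_ hbound, ?_⟩
  · filter_upwards [hmem] with q hq
    have hle := norm_le_mul_re_of_mem_sector hq
    rw [saddleLine_re, saddle_re] at hle
    rw [norm_div, norm_pow, norm_real, Real.norm_eq_abs, sq_abs]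
    gcongr
  · filter_upwards [hmem, (tendsto_fst.comp hfst).eventually (eventually_ge_atTop 1)] with q hq hn
    exact div_quarticRoot_sq_mem_sector hn hq

lemma tendsto_windowProfile {a : ℂ} (ha : IsPrimitiveRoot a k) (hx₀ : ‖x₀‖ < 1)
    (h : 0 < fk k x₀) (hB : |(saddle k x₀).im| < B * fk k x₀) (v : ℝ) :
    Tendsto (fun p : ℕ × ℂ => windowProfile k a p.1 p.2 v) (atTop ×ˢ 𝓝 x₀)
      (𝓝 (cexp (constTerm a x₀) * cexp (-(1 / saddle k x₀) * (v : ℂ) ^ 2))) := by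
  have hne : saddle k x₀ ≠ 0 := fun h0 => h.ne' (by rw [← saddle_re, h0, zero_re])
  have hpair : Tendsto (fun p : ℕ × ℂ => (p, v)) (atTop ×ˢ 𝓝 x₀) (((atTop ×ˢ 𝓝 x₀) ×ˢ ⊤) ⊓
      𝓟 {q | saddleLine (saddle k q.1.2) q.1.1 q.2 ∈ sector B}) :=
    tendsto_inf.mpr ⟨tendsto_id.prodMk tendsto_top,
      tendsto_principal.mpr (eventually_saddleLine_mem_sector hx₀ h hB v)⟩
  have hlog := tendsto_logGenFun_sub_dilog_div (pos_of_fk_pos h) ha hx₀ tendsto_snd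
    ((tendsto_saddleLine_div hx₀ h B).comp hpair)
  rw [← Complex.exp_add, show -(1 / saddle k x₀) * (v : ℂ) ^ 2 = -(v ^ 2 / saddle k x₀) by ring,
    ← sub_eq_add_neg]
  exact (hlog.sub (tendsto_const_nhds.div (tendsto_saddleLine hx₀ h v) hne)).cexp

lemma exists_norm_windowProfile_le {a : ℂ} (ha : IsPrimitiveRoot a k) (hx₀ : ‖x₀‖ < 1)
    (h : 0 < fk k x₀) (hB : 0 ≤ B) :
    ∃ C, ∃ c > 0, ∀ᶠ p : ℕ × ℂ in atTop ×ˢ 𝓝 x₀, ∀ v : ℝ,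
      saddleLine (saddle k p.2) p.1 v ∈ sector B →
        ‖windowProfile k a p.1 p.2 v‖ ≤ C * Real.exp (-c * v ^ 2) := by
  have hlog := (continuous_re.tendsto _).comp <|
    tendsto_logGenFun_sub_dilog_div (pos_of_fk_pos h) ha hx₀ (tendsto_snd.comp
      (tendsto_fst.mono_left inf_le_left)) (tendsto_saddleLine_div hx₀ h B)
  have hle := hlog.eventually (eventually_le_nhds (lt_add_one (constTerm a x₀).re))
  rw [eventually_inf_principal] at hle
  refine ⟨Real.exp ((constTerm a x₀).re + 1), ((1 + B) ^ 2 * (2 * fk k x₀))⁻¹, by positivity, ?_⟩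
  filter_upwards [hle.curry, (tendsto_fk_snd hx₀ h).eventually
    (eventually_le_nhds (lt_mul_of_one_lt_left h one_lt_two))] with p hp hfk v hv
  have hinv := inv_le_inv_re_of_mem_sector hv
  have hre : 0 < (saddleLine (saddle k p.2) p.1 v).re := hv.1
  rw [saddleLine_re, saddle_re] at hinv hre
  have hc : ((1 + B) ^ 2 * (2 * fk k x₀))⁻¹ ≤ ((saddleLine (saddle k p.2) p.1 v)⁻¹).re :=
    le_trans (by gcongr) hinv
  have hquad : ((v : ℂ) ^ 2 / saddleLine (saddle k p.2) p.1 v).re =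
      ((saddleLine (saddle k p.2) p.1 v)⁻¹).re * v ^ 2 := by
    rw [div_eq_mul_inv, ← ofReal_pow, re_ofReal_mul, mul_comm]
  rw [windowProfile, Complex.norm_exp, ← Real.exp_add, Real.exp_le_exp, sub_re, hquad]
  have hlogv := hp v hv
  dsimp only [Function.comp_def] at hlogv
  nlinarith [mul_le_mul_of_nonneg_right hc (sq_nonneg v)]

/-- The part of the Cauchy integral over the angles within `B σ` of `ψ`, on the circle of radius
`exp (-σ)` through the saddle points. -/
noncomputable def windowIntegral (k : ℕ) (B : ℝ) (n : ℕ) (x : ℂ) (ψ : ℝ) : ℂ :=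
  ∫ φ in (ψ - B * (fk k x / quarticRoot n ^ 2))..(ψ + B * (fk k x / quarticRoot n ^ 2)),
    integrand n x (fk k x / quarticRoot n ^ 2) φ

lemma windowNormalizer_mul_windowIntegral {n : ℕ} (hn : 1 ≤ n) {x : ℂ} (hx : 0 < fk k x)
    (hB : 0 ≤ B) (ψ : ℝ) :
    (quarticRoot n : ℂ) ^ 3 * (windowNormalizer k n x ψ * windowIntegral k B n x ψ) =
      ∫ v, {v | saddleLine (saddle k x) n v ∈ sector B}.indicator
        (windowProfile k (cexp (ψ * I)) n x) v := by
  have hτ := quarticRoot_pos hn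
  have hset : {v | saddleLine (saddle k x) n v ∈ sector B} =
      Set.Icc (quarticRoot n * (-(B * fk k x) - (saddle k x).im))
        (quarticRoot n * (B * fk k x - (saddle k x).im)) := by
    ext v
    rw [← saddle_re]
    exact saddleLine_mem_sector_iff (by rwa [saddle_re]) hn v
  have hle : quarticRoot n * (-(B * fk k x) - (saddle k x).im) ≤
      quarticRoot n * (B * fk k x - (saddle k x).im) := by
    gcongr
    linarith [mul_nonneg hB hx.le]
  have hlower : (quarticRoot n ^ 3)⁻¹ * (quarticRoot n * (-(B * fk k x) - (saddle k x).im)) +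
      (ψ + (saddle k x).im / quarticRoot n ^ 2) = ψ - B * (fk k x / quarticRoot n ^ 2) := by
    field_simp
    ring
  have hupper : (quarticRoot n ^ 3)⁻¹ * (quarticRoot n * (B * fk k x - (saddle k x).im)) +
      (ψ + (saddle k x).im / quarticRoot n ^ 2) = ψ + B * (fk k x / quarticRoot n ^ 2) := by
    field_simp
    ring
  rw [hset, MeasureTheory.integral_indicator measurableSet_Icc,
    MeasureTheory.integral_Icc_eq_integral_Ioc, ← intervalIntegral.integral_of_le hle]
  simp only [← windowNormalizer_mul_integrand hn hx]
  rw [intervalIntegral.integral_const_mul, intervalIntegral.integral_comp_mul_add _ (by positivity),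
    hlower, hupper, inv_inv, real_smul, ofReal_pow, mul_left_comm, windowIntegral]

lemma continuous_windowProfile {n : ℕ} (hn : 1 ≤ n) {x : ℂ} (hx : ‖x‖ < 1) (hfk : 0 < fk k x)
    (ψ : ℝ) : Continuous (windowProfile k (cexp (ψ * I)) n x) := by
  rw [← funext (windowNormalizer_mul_integrand hn hfk ψ)]
  exact continuous_const.mul ((continuous_integrand n hx
    (div_pos hfk (pow_pos (quarticRoot_pos hn) 2))).comp (by fun_prop))

theorem tendsto_windowNormalizer_mul_windowIntegral (hx₀ : ‖x₀‖ < 1) (h : 0 < fk k x₀) {ψ : ℝ}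
    (hψ : IsPrimitiveRoot (cexp (ψ * I)) k) (hB : |(saddle k x₀).im| < B * fk k x₀) :
    Tendsto (fun p : ℕ × ℂ => (quarticRoot p.1 : ℂ) ^ 3 *
        (windowNormalizer k p.1 p.2 ψ * windowIntegral k B p.1 p.2 ψ))
      (atTop ×ˢ 𝓝 x₀)
      (𝓝 (cexp (constTerm (cexp (ψ * I)) x₀) *
        (Real.pi / (1 / saddle k x₀)) ^ (1 / 2 : ℂ))) := by
  have hB0 : 0 ≤ B := (pos_of_mul_pos_left ((abs_nonneg _).trans_lt hB) h.le).le
  have hn : ∀ᶠ p : ℕ × ℂ in atTop ×ˢ 𝓝 x₀, 1 ≤ p.1 :=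
    tendsto_fst.eventually (eventually_ge_atTop 1)
  have hfk := (tendsto_fk_snd hx₀ h).eventually (lt_mem_nhds h)
  have hx : ∀ᶠ p : ℕ × ℂ in atTop ×ˢ 𝓝 x₀, ‖p.2‖ < 1 :=
    tendsto_snd.norm.eventually (gt_mem_nhds hx₀)
  have hgauss : 0 < (1 / saddle k x₀).re := by
    have hne : saddle k x₀ ≠ 0 := fun h0 => h.ne' (by rw [← saddle_re, h0, zero_re])
    rw [one_div, inv_re, saddle_re]
    exact div_pos h (normSq_pos.mpr hne)
  rw [← integral_gaussian_complex hgauss, ← MeasureTheory.integral_const_mul]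
  refine Tendsto.congr' ((hn.and hfk).mono fun p hp =>
    (windowNormalizer_mul_windowIntegral hp.1 hp.2 hB0 ψ).symm) ?_
  obtain ⟨C, c, hc, hbound⟩ := exists_norm_windowProfile_le hψ hx₀ h hB0
  refine MeasureTheory.tendsto_integral_filter_of_dominated_convergence
    (fun v => |C| * Real.exp (-c * v ^ 2)) ?_ ?_ ((integrable_exp_neg_mul_sq hc).const_mul _)
    (Eventually.of_forall fun v => ?_)
  · filter_upwards [hn, hfk, hx] with p hp1 hp2 hp3
    refine (continuous_windowProfile hp1 hp3 hp2 ψ).aestronglyMeasurable.indicator ?_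
    simp only [saddleLine_mem_sector_iff (by rwa [saddle_re]) hp1]
    exact measurableSet_Icc
  · filter_upwards [hbound] with p hp
    refine Eventually.of_forall fun v => ?_
    by_cases hv : saddleLine (saddle k p.2) p.1 v ∈ sector B
    · rw [Set.indicator_of_mem (by exact hv)]
      exact (hp v hv).trans (by gcongr; exact le_abs_self C)
    · rw [Set.indicator_of_notMem (by exact hv), norm_zero]
      positivity
  · refine (tendsto_windowProfile hψ hx₀ h hB v).congr' ?_
    filter_upwards [eventually_saddleLine_mem_sector hx₀ h hB v] with p hp
    rw [Set.indicator_of_mem (by exact hp)]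

end WindowLimit

/-! ### Domination on the region `R(3)` -/

section DilogEstimates

lemma norm_ofReal_mul_lt_one {x : ℂ} (hx : ‖x‖ < 1) {t : ℝ} (ht : t ∈ Set.Icc (0 : ℝ) 1) :
    ‖(t : ℂ) * x‖ < 1 := by
  rw [norm_mul, norm_real, Real.norm_of_nonneg ht.1]
  exact (mul_le_of_le_one_left (norm_nonneg x) ht.2).trans_lt hx

lemma hasDerivAt_re_mul_dilog_ofReal_mul {x : ℂ} (hx : ‖x‖ < 1) (c : ℂ) {t : ℝ}
    (ht : t ∈ Set.Icc (0 : ℝ) 1) :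
    ∃ D : ℝ, HasDerivAt (fun t : ℝ => (c * dilog (t * x)).re) D t ∧
      t * D = (c * -log (1 - t * x)).re := by
  have htx := norm_ofReal_mul_lt_one hx ht
  have hlog : (t : ℂ) * x * ∑' n : ℕ, ((t : ℂ) * x) ^ n / ((n : ℂ) + 1) = -log (1 - t * x) := by
    rw [← (hasSum_neg_log_one_sub htx).tsum_eq, ← tsum_mul_left]
    exact tsum_congr fun n => by ring
  have hderiv : HasDerivAt (fun w : ℂ => c * dilog (w * x))
      (c * ((∑' n : ℕ, ((t : ℂ) * x) ^ n / ((n : ℂ) + 1)) * x)) t :=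
    (HasDerivAt.comp (h := fun w : ℂ => w * x) (t : ℂ) (hasDerivAt_dilog htx)
      (hasDerivAt_mul_const x)).const_mul c
  refine ⟨_, hderiv.real_of_complex, ?_⟩
  rw [← re_ofReal_mul, ← hlog]
  ring_nf

/- Integrating `Li₂'(w) = -log (1 - w) / w` along the segment from `0` to `x`. -/
lemma le_re_mul_dilog {x : ℂ} (hx : ‖x‖ < 1) {c : ℂ} {a b d : ℝ}
    (h : ∀ t ∈ Set.Ioo (0 : ℝ) 1,
      a * t + b * t ^ 2 + d * t ^ 3 ≤ (c * -log (1 - t * x)).re) :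
    a + b / 2 + d / 3 ≤ (c * dilog x).re := by
  choose! D hD hDlog using fun t ht => hasDerivAt_re_mul_dilog_ofReal_mul hx c (t := t) ht
  have hpoly (t : ℝ) : HasDerivAt (fun t : ℝ => a * t + b / 2 * t ^ 2 + d / 3 * t ^ 3)
      (a + b * t + d * t ^ 2) t := by
    refine ((((hasDerivAt_id t).const_mul a).add ((hasDerivAt_pow 2 t).const_mul (b / 2))).add
      ((hasDerivAt_pow 3 t).const_mul (d / 3))).congr_deriv ?_
    push_cast
    ring
  have hdiff (t : ℝ) (ht : t ∈ Set.Icc (0 : ℝ) 1) := (hD t ht).sub (hpoly t)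
  have hmono := monotoneOn_of_deriv_nonneg (convex_Icc (0 : ℝ) 1)
    (fun t ht => (hdiff t ht).continuousAt.continuousWithinAt)
    (fun t ht => (hdiff t (interior_subset ht)).differentiableAt.differentiableWithinAt)
    fun t ht => by
      have ht' := interior_subset ht
      rw [interior_Icc] at ht
      rw [(hdiff t ht').deriv, sub_nonneg, ← mul_le_mul_iff_of_pos_left ht.1, hDlog t ht']
      exact (h t ht).trans_eq' (by ring)
  have hends := hmono (Set.left_mem_Icc.mpr zero_le_one) (Set.right_mem_Icc.mpr zero_le_one)
    zero_le_one
  simp only [Pi.sub_apply, ofReal_zero, zero_mul, dilog_zero, mul_zero, zero_re, ofReal_one,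
    one_mul] at hends
  linarith

lemma norm_one_sub_sq (u : ℂ) : ‖1 - u‖ ^ 2 = 1 - 2 * u.re + ‖u‖ ^ 2 := by
  rw [← normSq_eq_norm_sq, ← normSq_eq_norm_sq, normSq_apply, normSq_apply]
  simp only [sub_re, sub_im, one_re, one_im]
  ring

lemma neg_log_one_sub_re (u : ℂ) :
    (-log (1 - u)).re = -(Real.log (1 - 2 * u.re + ‖u‖ ^ 2) / 2) := by
  rw [neg_re, log_re, ← norm_one_sub_sq, Real.log_pow]
  push_cast
  ring

lemma one_sub_ne_zero_of_norm_lt_one {u : ℂ} (hu : ‖u‖ < 1) : 1 - u ≠ 0 := by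
  refine sub_ne_zero.mpr fun h => ?_
  rw [← h, norm_one] at hu
  exact lt_irrefl 1 hu

lemma one_sub_two_mul_re_add_norm_sq_pos {u : ℂ} (hu : ‖u‖ < 1) :
    0 < 1 - 2 * u.re + ‖u‖ ^ 2 := by
  rw [← norm_one_sub_sq]
  exact pow_pos (norm_pos_iff.mpr (one_sub_ne_zero_of_norm_lt_one hu)) 2

lemma im_div_norm_le_neg_log_one_sub_im {u : ℂ} (hu : ‖u‖ < 1) (him : 0 ≤ u.im) :
    u.im / ‖1 - u‖ ≤ (-log (1 - u)).im := by
  have harg : arg (1 - u) ≤ 0 := by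
    rcases him.eq_or_lt with h0 | hpos
    · refine (arg_eq_zero_iff.mpr ⟨?_, by simp [← h0]⟩).le
      simpa using (re_le_norm u).trans hu.le
    · exact (arg_neg_iff.mpr (by simpa using hpos)).le
  have hsin := Real.sin_le (neg_nonneg.mpr harg)
  rwa [Real.sin_neg, sin_arg, ← neg_div, sub_im, one_im, zero_sub, neg_neg, ← log_im,
    ← neg_im] at hsin

lemma re_sub_le_dilog_re {x : ℂ} (hx : ‖x‖ < 1) : x.re - ‖x‖ ^ 2 / 4 ≤ (dilog x).re := by
  have := le_re_mul_dilog hx (c := 1) (a := x.re) (b := -(‖x‖ ^ 2 / 2)) (d := 0) fun t ht => by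
    have htx := norm_ofReal_mul_lt_one hx (Set.Ioo_subset_Icc_self ht)
    rw [one_mul, neg_log_one_sub_re]
    have hlog := Real.log_le_sub_one_of_pos (one_sub_two_mul_re_add_norm_sq_pos htx)
    rw [norm_mul, norm_real, Real.norm_eq_abs, mul_pow, sq_abs, re_ofReal_mul] at hlog ⊢
    linarith
  rw [one_mul] at this
  linarith

lemma neg_mul_norm_le_dilog_re {x : ℂ} (hx : ‖x‖ < 1) (h : 2 * x.re ^ 2 ≤ ‖x‖ ^ 2) :
    -(71 / 100 * ‖x‖) ≤ (dilog x).re := by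
  have hre : -x.re ≤ 71 / 100 * ‖x‖ := by
    refine le_of_sq_le_sq ?_ (by positivity)
    rw [neg_sq, mul_pow]
    linarith [sq_nonneg ‖x‖]
  have := le_re_mul_dilog hx (c := 1) (a := -(71 / 100 * ‖x‖)) (b := 0) (d := 0) fun t ht => by
    have htx := norm_ofReal_mul_lt_one hx (Set.Ioo_subset_Icc_self ht)
    rw [one_mul, neg_log_one_sub_re]
    have hexp : 1 - 2 * ((t : ℂ) * x).re + ‖(t : ℂ) * x‖ ^ 2 ≤
        Real.exp (71 / 50 * (t * ‖x‖)) := by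
      refine le_trans ?_ (Real.quadratic_le_exp_of_nonneg
        (mul_nonneg (by norm_num) (mul_nonneg ht.1.le (norm_nonneg x))))
      rw [norm_mul, norm_real, Real.norm_eq_abs, abs_of_pos ht.1, re_ofReal_mul]
      linarith [mul_le_mul_of_nonneg_left hre ht.1.le, sq_nonneg (t * ‖x‖)]
    have hlog := Real.log_le_log (one_sub_two_mul_re_add_norm_sq_pos htx) hexp
    rw [Real.log_exp] at hlog
    linarith
  rw [one_mul] at this
  linarith

lemma dilog_re_nonpos {x : ℂ} (hx : ‖x‖ < 1) (hre : x.re ≤ 0) : (dilog x).re ≤ 0 := by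
  have := le_re_mul_dilog hx (c := -1) (a := 0) (b := 0) (d := 0) fun t ht => by
    have hlog : 0 ≤ Real.log (1 - 2 * ((t : ℂ) * x).re + ‖(t : ℂ) * x‖ ^ 2) := by
      refine Real.log_nonneg ?_
      rw [re_ofReal_mul]
      linarith [mul_nonpos_of_nonneg_of_nonpos ht.1.le hre, sq_nonneg ‖(t : ℂ) * x‖]
    rw [neg_one_mul, neg_re, neg_log_one_sub_re]
    linarith
  rw [neg_one_mul, neg_re] at this
  linarith

/- As a function of `y ^ 2`, the tangent of `y⁻¹` at `y ^ 2 = 2` is `(6 - y ^ 2) / (4 * √2)`, and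
`7 / 40` is just below `1 / (4 * √2)`. -/
lemma mul_six_sub_sq_le_inv {y : ℝ} (hy : 0 < y) : 7 / 40 * (6 - y ^ 2) ≤ y⁻¹ := by
  rw [← one_div, le_div_iff₀ hy]
  nlinarith [mul_nonneg hy.le (sq_nonneg (y - 7 / 5)), sq_nonneg (y - 7 / 5)]

lemma im_mul_le_dilog_im_of_nonneg {x : ℂ} (hx : ‖x‖ < 1) (him : 0 ≤ x.im) :
    x.im * (7 / 40 * (5 + x.re - ‖x‖ ^ 2 / 3)) ≤ (dilog x).im := by
  have hI (z : ℂ) : (-I * z).re = z.im := by simp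
  have := le_re_mul_dilog hx (c := -I) (a := x.im * (7 / 8)) (b := x.im * (7 / 20 * x.re))
    (d := -(x.im * (7 / 40 * ‖x‖ ^ 2))) fun t ht => by
      have htx := norm_ofReal_mul_lt_one hx (Set.Ioo_subset_Icc_self ht)
      have htim : 0 ≤ ((t : ℂ) * x).im := by
        rw [im_ofReal_mul]
        exact mul_nonneg ht.1.le him
      rw [hI]
      refine le_trans ?_ (im_div_norm_le_neg_log_one_sub_im htx htim)
      rw [div_eq_mul_inv]
      refine le_trans (le_of_eq ?_) (mul_le_mul_of_nonneg_left (mul_six_sub_sq_le_inv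
        (norm_pos_iff.mpr (one_sub_ne_zero_of_norm_lt_one htx))) htim)
      rw [norm_one_sub_sq, norm_mul, norm_real, Real.norm_eq_abs, mul_pow, sq_abs, re_ofReal_mul,
        im_ofReal_mul]
      ring
  rw [hI] at this
  linarith

lemma dilog_conj (z : ℂ) : dilog ((starRingEnd ℂ) z) = (starRingEnd ℂ) (dilog z) := by
  simp only [dilog, conj_tsum, map_div₀, map_pow, map_add, map_natCast, map_one]

lemma abs_im_mul_le_abs_dilog_im {x : ℂ} (hx : ‖x‖ < 1) :
    |x.im| * (7 / 40 * (5 + x.re - ‖x‖ ^ 2 / 3)) ≤ |(dilog x).im| := by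
  rcases le_total 0 x.im with him | him
  · rw [abs_of_nonneg him]
    exact (im_mul_le_dilog_im_of_nonneg hx him).trans (le_abs_self _)
  · have hconj := im_mul_le_dilog_im_of_nonneg (x := (starRingEnd ℂ) x) (by rwa [norm_conj])
      (by rwa [conj_im, neg_nonneg])
    rw [dilog_conj, norm_conj, conj_re, conj_im, conj_im] at hconj
    rw [abs_of_nonpos him]
    exact hconj.trans (neg_le_abs _)

lemma norm_dilog_le {z : ℂ} (hz : ‖z‖ ≤ 1) : ‖dilog z‖ ≤ 5 / 3 * ‖z‖ := by
  have hzeta : HasSum (fun n : ℕ => 1 / ((n : ℝ) + 1) ^ 2) (Real.pi ^ 2 / 6) := by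
    simpa using (hasSum_nat_add_iff' 1).mpr hasSum_zeta_two
  have hpi : Real.pi ^ 2 / 6 ≤ 5 / 3 := by
    nlinarith [Real.pi_lt_d2, Real.pi_pos]
  refine (tsum_of_norm_bounded (hzeta.mul_right ‖z‖) fun n => ?_).trans
    (mul_le_mul_of_nonneg_right hpi (norm_nonneg z))
  rw [norm_div, norm_pow, norm_pow, norm_natCast_add_one, div_mul_eq_mul_div, one_mul]
  gcongr
  exact pow_le_of_le_one (norm_nonneg z) hz n.succ_ne_zero

end DilogEstimates

section Domination

lemma reSqrtSq_le_norm (z : ℂ) : reSqrtSq z ≤ ‖z‖ := by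
  rw [reSqrtSq]
  linarith [re_le_norm z]

lemma re_le_reSqrtSq (z : ℂ) : z.re ≤ reSqrtSq z := by
  rw [reSqrtSq]
  linarith [re_le_norm z]

lemma reSqrtSq_le_half_norm {z : ℂ} (hz : z.re ≤ 0) : reSqrtSq z ≤ ‖z‖ / 2 := by
  rw [reSqrtSq]
  linarith

lemma re_sq_add_im_sq (z : ℂ) : z.re ^ 2 + z.im ^ 2 = ‖z‖ ^ 2 := by
  rw [← normSq_eq_norm_sq, normSq_apply, sq, sq]

lemma one_add_mul_re_add_mul_abs_im_le {p q : ℝ} (h : p ^ 2 + q ^ 2 = 1) (z : ℂ) :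
    (1 + p) * z.re + q * |z.im| ≤ 2 * reSqrtSq z := by
  have hcs : p * z.re + q * |z.im| ≤ ‖z‖ := by
    refine le_of_sq_le_sq ?_ (norm_nonneg z)
    calc (p * z.re + q * |z.im|) ^ 2
        ≤ (p ^ 2 + q ^ 2) * (z.re ^ 2 + |z.im| ^ 2) := by
          linarith [sq_nonneg (p * |z.im| - q * z.re)]
      _ = ‖z‖ ^ 2 := by
          rw [h, sq_abs, one_mul, re_sq_add_im_sq]
  rw [reSqrtSq]
  linarith

lemma mul_norm_le_reSqrtSq_dilog_of_re_nonneg {x : ℂ} (hx : ‖x‖ < 1) (hre : 0 ≤ x.re) :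
    7 / 25 * ‖x‖ ≤ reSqrtSq (dilog x) := by
  have hfun := one_add_mul_re_add_mul_abs_im_le (p := 0) (q := 1) (by norm_num) (dilog x)
  have hDre := re_sub_le_dilog_re hx
  have hr2 : ‖x‖ ^ 2 ≤ ‖x‖ := pow_le_of_le_one (norm_nonneg x) hx.le two_ne_zero
  have hDim : |x.im| * (49 / 60) ≤ |(dilog x).im| := by
    refine le_trans ?_ (abs_im_mul_le_abs_dilog_im hx)
    gcongr
    linarith
  have hnorm := norm_le_abs_re_add_abs_im x
  rw [abs_of_nonneg hre] at hnorm
  linarith [norm_nonneg x]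

lemma mul_norm_le_two_mul_reSqrtSq_dilog {x : ℂ} (hx : ‖x‖ < 1) (hre : 2 * x.re ^ 2 ≤ ‖x‖ ^ 2)
    {p q : ℝ} (hp : -1 ≤ p) (hq : 0 ≤ q) (hpq : p ^ 2 + q ^ 2 = 1) {a b : ℝ}
    (hb : 0 ≤ b) (hb' : b ≤ 14 / 3) (ha : a * ‖x‖ ≤ |x.im|) (hb_re : -(b * ‖x‖) ≤ x.re) :
    (q * (a * (7 / 40 * (14 / 3 - b))) - (1 + p) * (71 / 100)) * ‖x‖ ≤
      2 * reSqrtSq (dilog x) := by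
  refine le_trans ?_ (one_add_mul_re_add_mul_abs_im_le hpq (dilog x))
  have hr2 : ‖x‖ ^ 2 ≤ 1 := pow_le_one₀ (norm_nonneg x) hx.le
  have hDre := mul_le_mul_of_nonneg_left (neg_mul_norm_le_dilog_re hx hre)
    (neg_le_iff_add_nonneg'.mp hp)
  have hDim : a * ‖x‖ * (7 / 40 * (14 / 3 - b)) ≤ |(dilog x).im| := by
    refine le_trans ?_ (abs_im_mul_le_abs_dilog_im hx)
    refine mul_le_mul ha ?_ (by linarith) (abs_nonneg _)
    linarith [mul_le_of_le_one_right hb hx.le]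
  linarith [mul_le_mul_of_nonneg_left hDim hq]

lemma mul_norm_le_reSqrtSq_dilog_of_two_mul_re_sq_le {x : ℂ} (hx : ‖x‖ < 1)
    (h : 2 * x.re ^ 2 ≤ ‖x‖ ^ 2) :
    7 / 100 * ‖x‖ ≤ reSqrtSq (dilog x) := by
  have him : 7 / 10 * ‖x‖ ≤ |x.im| := by
    refine le_of_sq_le_sq ?_ (abs_nonneg _)
    rw [sq_abs, mul_pow]
    linarith [re_sq_add_im_sq x, sq_nonneg ‖x‖]
  have hre : -(71 / 100 * ‖x‖) ≤ x.re := (abs_le_of_sq_le_sq' (by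
    rw [mul_pow]
    linarith [sq_nonneg ‖x‖]) (by positivity)).1
  have := mul_norm_le_two_mul_reSqrtSq_dilog hx h (p := -(4 / 5)) (q := 3 / 5) (by norm_num)
    (by norm_num) (by norm_num) (by norm_num) (by norm_num) him hre
  linarith [norm_nonneg x]

lemma mul_norm_le_reSqrtSq_dilog_of_twenty_mul_re_sq_le {x : ℂ} (hx : ‖x‖ < 1)
    (h : 20 * x.re ^ 2 ≤ 3 * ‖x‖ ^ 2) :
    11 / 100 * ‖x‖ ≤ reSqrtSq (dilog x) := by
  have him : 9 / 10 * ‖x‖ ≤ |x.im| := by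
    refine le_of_sq_le_sq ?_ (abs_nonneg _)
    rw [sq_abs, mul_pow]
    linarith [re_sq_add_im_sq x, sq_nonneg ‖x‖]
  have hre : -(2 / 5 * ‖x‖) ≤ x.re := (abs_le_of_sq_le_sq' (by
    rw [mul_pow]
    linarith [sq_nonneg ‖x‖]) (by positivity)).1
  have := mul_norm_le_two_mul_reSqrtSq_dilog hx (by linarith [sq_nonneg ‖x‖]) (p := -(3 / 5))
    (q := 4 / 5) (by norm_num) (by norm_num) (by norm_num) (by norm_num) (by norm_num) him hre
  linarith [norm_nonneg x]

lemma fk_one_sq (x : ℂ) : fk 1 x ^ 2 = reSqrtSq (dilog x) := by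
  rw [fk_sq, pow_one, Nat.cast_one, one_pow, div_one]

lemma sq_re (z : ℂ) : (z ^ 2).re = 2 * z.re ^ 2 - ‖z‖ ^ 2 := by
  rw [← re_sq_add_im_sq, sq z, mul_re]
  ring

lemma mul_norm_sq_le_fk_one_sq_or_fk_two_sq {x : ℂ} (hx : ‖x‖ < 1) :
    7 / 100 * ‖x‖ ^ 2 ≤ fk 1 x ^ 2 ∨ 7 / 100 * ‖x‖ ^ 2 ≤ fk 2 x ^ 2 := by
  rcases le_total (2 * x.re ^ 2) (‖x‖ ^ 2) with h | h
  · refine Or.inl ?_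
    rw [fk_one_sq]
    refine le_trans ?_ (mul_norm_le_reSqrtSq_dilog_of_two_mul_re_sq_le hx h)
    gcongr
    exact pow_le_of_le_one (norm_nonneg x) hx.le two_ne_zero
  · refine Or.inr ?_
    have hx2 : ‖x ^ 2‖ < 1 := by
      rw [norm_pow]
      exact pow_lt_one₀ (norm_nonneg x) hx two_ne_zero
    have hbound := mul_norm_le_reSqrtSq_dilog_of_re_nonneg hx2 (by
      rw [sq_re]
      exact sub_nonneg.mpr h)
    rw [norm_pow] at hbound
    rw [fk_sq]
    push_cast
    linarith

lemma fk_sq_le {k : ℕ} {x : ℂ} (hx : ‖x‖ ≤ 1) : fk k x ^ 2 ≤ 5 / 3 * ‖x‖ ^ k / k ^ 2 := by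
  rw [fk_sq, ← norm_pow]
  gcongr
  refine (reSqrtSq_le_norm _).trans (norm_dilog_le ?_)
  rw [norm_pow]
  exact pow_le_one₀ (norm_nonneg x) hx

lemma fk_four_sq_lt_of_re_nonpos {x : ℂ} (hx : ‖x‖ < 1) (hx0 : x ≠ 0) (h : (x ^ 4).re ≤ 0) :
    fk 4 x ^ 2 < 7 / 100 * ‖x‖ ^ 2 := by
  have hx4 : ‖x ^ 4‖ < 1 := by
    rw [norm_pow]
    exact pow_lt_one₀ (norm_nonneg x) hx four_ne_zero
  have hD := (reSqrtSq_le_half_norm (dilog_re_nonpos hx4 h)).trans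
    (div_le_div_of_nonneg_right (norm_dilog_le hx4.le) zero_le_two)
  have hr : ‖x‖ ^ 4 ≤ ‖x‖ ^ 2 := pow_le_pow_of_le_one (norm_nonneg x) hx.le (by norm_num)
  have hpos : 0 < ‖x‖ ^ 2 := pow_pos (norm_pos_iff.mpr hx0) 2
  rw [norm_pow] at hD
  rw [fk_sq]
  push_cast
  linarith

lemma fk_four_sq_lt_of_re_pos {x : ℂ} (hx : ‖x‖ < 1) (hx0 : x ≠ 0) (h : 0 < (x ^ 4).re) :
    fk 4 x ^ 2 < fk 1 x ^ 2 ∨ fk 4 x ^ 2 < fk 2 x ^ 2 := by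
  have hpos : 0 < ‖x‖ ^ 2 := pow_pos (norm_pos_iff.mpr hx0) 2
  have hr1 : ‖x‖ ^ 2 ≤ ‖x‖ := pow_le_of_le_one (norm_nonneg x) hx.le two_ne_zero
  have hr : ‖x‖ ^ 4 ≤ ‖x‖ ^ 2 := pow_le_pow_of_le_one (norm_nonneg x) hx.le (by norm_num)
  have hx2 : ‖x ^ 2‖ < 1 := by
    rw [norm_pow]
    exact pow_lt_one₀ (norm_nonneg x) hx two_ne_zero
  have hfour := fk_sq_le (k := 4) hx.le
  have habs : 7 / 10 * ‖x‖ ^ 2 ≤ |(x ^ 2).re| := by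
    refine abs_le_of_sq_le_sq' ?_ (abs_nonneg _) |>.2
    rw [show x ^ 4 = (x ^ 2) ^ 2 by ring, sq_re, norm_pow] at h
    rw [sq_abs, mul_pow]
    linarith [sq_nonneg (‖x‖ ^ 2)]
  push_cast at hfour
  rcases le_total 0 (x ^ 2).re with hre | hre
  · refine Or.inr (hfour.trans_lt ?_)
    have hD := (re_sub_le_dilog_re hx2).trans (re_le_reSqrtSq _)
    rw [abs_of_nonneg hre] at habs
    rw [norm_pow, ← pow_mul] at hD
    rw [fk_sq]
    push_cast
    linarith
  · refine Or.inl (hfour.trans_lt ?_)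
    rw [abs_of_nonpos hre, sq_re] at habs
    rw [fk_one_sq]
    linarith [mul_norm_le_reSqrtSq_dilog_of_twenty_mul_re_sq_le hx (by linarith)]

lemma fk_sq_lt_of_five_le {k : ℕ} (hk : 5 ≤ k) {x : ℂ} (hx : ‖x‖ < 1) (hx0 : x ≠ 0) :
    fk k x ^ 2 < 7 / 100 * ‖x‖ ^ 2 := by
  have hpos : 0 < ‖x‖ ^ 2 := pow_pos (norm_pos_iff.mpr hx0) 2
  have hk5 : (5 : ℝ) ≤ k := by exact_mod_cast hk
  calc fk k x ^ 2 ≤ 5 / 3 * ‖x‖ ^ k / k ^ 2 := fk_sq_le hx.le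
    _ ≤ 5 / 3 * ‖x‖ ^ 2 / 5 ^ 2 := by
      gcongr 5 / 3 * ?_ / ?_ ^ 2
      exact pow_le_pow_of_le_one (norm_nonneg x) hx.le (by lia)
    _ < 7 / 100 * ‖x‖ ^ 2 := by linarith

theorem fk_lt_fk_one_or_fk_two {k : ℕ} (hk : 4 ≤ k) {x : ℂ} (hx : ‖x‖ < 1) (hx0 : x ≠ 0) :
    fk k x < fk 1 x ∨ fk k x < fk 2 x := by
  suffices fk k x ^ 2 < fk 1 x ^ 2 ∨ fk k x ^ 2 < fk 2 x ^ 2 from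
    this.imp (lt_of_pow_lt_pow_left₀ 2 (fk_nonneg 1 x)) (lt_of_pow_lt_pow_left₀ 2 (fk_nonneg 2 x))
  have hmax := mul_norm_sq_le_fk_one_sq_or_fk_two_sq hx
  rcases hk.eq_or_lt with rfl | hk5
  · rcases le_or_gt (x ^ 4).re 0 with h | h
    · have hlt := fk_four_sq_lt_of_re_nonpos hx hx0 h
      exact hmax.imp hlt.trans_le hlt.trans_le
    · exact fk_four_sq_lt_of_re_pos hx hx0 h
  · have hlt := fk_sq_lt_of_five_le hk5 hx hx0
    exact hmax.imp hlt.trans_le hlt.trans_le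

lemma fk_three_lt_fk_two_of_im_eq_zero {x : ℂ} (hx : ‖x‖ < 1) (hx0 : x ≠ 0) (him : x.im = 0) :
    fk 3 x < fk 2 x := by
  refine lt_of_pow_lt_pow_left₀ 2 (fk_nonneg 2 x) ((fk_sq_le hx.le).trans_lt ?_)
  have hpos : 0 < ‖x‖ ^ 2 := pow_pos (norm_pos_iff.mpr hx0) 2
  have hx2 : ‖x ^ 2‖ < 1 := by
    rw [norm_pow]
    exact pow_lt_one₀ (norm_nonneg x) hx two_ne_zero
  have hr3 : ‖x‖ ^ 3 ≤ ‖x‖ ^ 2 := pow_le_pow_of_le_one (norm_nonneg x) hx.le (by norm_num)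
  have hr4 : ‖x‖ ^ 4 ≤ ‖x‖ ^ 2 := pow_le_pow_of_le_one (norm_nonneg x) hx.le (by norm_num)
  have hD := (re_sub_le_dilog_re hx2).trans (re_le_reSqrtSq _)
  have hre := re_sq_add_im_sq x
  rw [sq_re, norm_pow, ← pow_mul] at hD
  rw [him] at hre
  rw [fk_sq]
  push_cast
  linarith

end Domination

section Strictness

lemma eventually_eq_of_eventually_re_le {E : Type*} [NormedAddCommGroup E] [NormedSpace ℂ E]
    {f : E → ℂ} {z₀ : E} (hf : AnalyticAt ℂ f z₀) (hre : ∀ᶠ z in 𝓝 z₀, (f z₀).re ≤ (f z).re) :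
    ∀ᶠ z in 𝓝 z₀, f z = f z₀ := by
  refine hf.eventually_constant_or_nhds_le_map_nhds.resolve_right fun hopen => ?_
  have hhalf : {w : ℂ | (f z₀).re ≤ w.re} ∈ 𝓝 (f z₀) := hopen hre
  rw [← mem_interior_iff_mem_nhds, interior_setOfPred_le_re] at hhalf
  exact lt_irrefl (f z₀).re hhalf

lemma norm_dilog_pow_div_sq_lt {j k : ℕ} (hj : 0 < j) (hjk : j < k) :
    ‖dilog ((1 / 4 : ℝ) ^ k) / (k : ℂ) ^ 2‖ < ‖dilog ((1 / 4 : ℝ) ^ j) / (j : ℂ) ^ 2‖ := by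
  have hnorm (i : ℕ) : ‖((1 / 4 : ℝ) : ℂ) ^ i‖ = (1 / 4) ^ i := by
    rw [norm_pow, norm_real, Real.norm_of_nonneg (by norm_num)]
  have hupper : ‖dilog ((1 / 4 : ℝ) ^ k)‖ ≤ 5 / 12 * (1 / 4) ^ j := by
    refine (norm_dilog_le ((hnorm k).trans_le (pow_le_one₀ (by norm_num) (by norm_num)))).trans ?_
    have hpow : (1 / 4 : ℝ) ^ k ≤ (1 / 4) ^ (j + 1) :=
      pow_le_pow_of_le_one (by norm_num) (by norm_num) hjk
    rw [pow_succ] at hpow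
    rw [hnorm]
    linarith
  have hlower : 3 / 4 * (1 / 4) ^ j ≤ ‖dilog ((1 / 4 : ℝ) ^ j)‖ := by
    have hlt : ((1 / 4 : ℝ)) ^ j < 1 := pow_lt_one₀ (by norm_num) (by norm_num) hj.ne'
    have hre := (re_sub_le_dilog_re ((hnorm j).trans_lt hlt)).trans (re_le_norm _)
    rw [hnorm, ← ofReal_pow, ofReal_re] at hre
    have hsq : ((1 / 4 : ℝ) ^ j) ^ 2 ≤ (1 / 4) ^ j :=
      pow_le_of_le_one (by positivity) hlt.le two_ne_zero
    rw [ofReal_pow] at hre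
    linarith
  rw [norm_div, norm_div, norm_pow, norm_pow, norm_natCast, norm_natCast]
  have hpos : (0 : ℝ) < (1 / 4) ^ j := by positivity
  have : (0 : ℝ) < j := Nat.cast_pos.mpr hj
  have hjk' : (j : ℝ) ≤ k := Nat.cast_le.mpr hjk.le
  calc ‖dilog ((1 / 4 : ℝ) ^ k)‖ / (k : ℝ) ^ 2 ≤ 5 / 12 * (1 / 4) ^ j / (j : ℝ) ^ 2 := by gcongr
    _ < ‖dilog ((1 / 4 : ℝ) ^ j)‖ / (j : ℝ) ^ 2 :=
      div_lt_div_of_pos_right (by linarith) (by positivity)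

lemma not_eventually_saddle_sub_eq {j k : ℕ} (hj : 0 < j) (hk : 0 < k) (hjk : j ≠ k) {x₀ : ℂ}
    (hx₀ : ‖x₀‖ < 1) (w : ℂ) :
    ¬ ∀ᶠ x in 𝓝 x₀, saddle k x - saddle j x = w := by
  intro hw
  have hD (i : ℕ) (hi : 0 < i) : AnalyticOnNhd ℂ (fun x => dilog (x ^ i) / (i : ℂ) ^ 2)
      (Metric.ball 0 1) := fun x hx => (analyticOnNhd_dilog_pow hi x hx).div_const
  have hquad : Set.EqOn
      (fun x => (dilog (x ^ k) / (k : ℂ) ^ 2 - dilog (x ^ j) / (j : ℂ) ^ 2 - w ^ 2) ^ 2)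
      (fun x => 4 * w ^ 2 * (dilog (x ^ j) / (j : ℂ) ^ 2)) (Metric.ball 0 1) := by
    refine AnalyticOnNhd.eqOn_of_preconnected_of_eventuallyEq
      ((((hD k hk).sub (hD j hj)).sub analyticOnNhd_const).pow 2)
      (analyticOnNhd_const.mul (hD j hj)) (convex_ball _ _).isPreconnected
      (mem_ball_zero_iff.mpr hx₀) (hw.mono fun x hx => ?_)
    simp only [← saddle_sq, ← hx]
    ring
  have hw0 : w = 0 := by
    simpa [zero_pow hk.ne', zero_pow hj.ne', dilog_zero] using
      hquad (Metric.mem_ball_self one_pos)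
  have hball : ((1 / 4 : ℝ) : ℂ) ∈ Metric.ball (0 : ℂ) 1 := by
    rw [mem_ball_zero_iff, norm_real]
    norm_num
  have heq := hquad hball
  simp only [hw0, ne_eq, OfNat.ofNat_ne_zero, not_false_eq_true, zero_pow, sub_zero, mul_zero,
    zero_mul, pow_eq_zero_iff, sub_eq_zero] at heq
  rcases hjk.lt_or_gt with h | h
  · exact (norm_dilog_pow_div_sq_lt hj h).ne (congrArg _ heq)
  · exact (norm_dilog_pow_div_sq_lt hk h).ne (congrArg _ heq.symm)

/- Where `fk j = fk k`, the function `saddle k - saddle j` would have a local minimum of its real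
part, hence be constant by the open mapping theorem. -/
theorem fk_lt_of_eventually_fk_le {j k : ℕ} (hjk : j ≠ k) {x₀ : ℂ} (hx₀ : ‖x₀‖ < 1)
    (h : 0 < fk k x₀) (hle : ∀ᶠ x in 𝓝 x₀, fk j x ≤ fk k x) :
    fk j x₀ < fk k x₀ := by
  refine hle.self_of_nhds.lt_of_ne fun heq => ?_
  have hj : 0 < fk j x₀ := heq ▸ h
  refine not_eventually_saddle_sub_eq (pos_of_fk_pos hj) (pos_of_fk_pos h) hjk hx₀ _
    (eventually_eq_of_eventually_re_le ((analyticAt_saddle hx₀ h).sub (analyticAt_saddle hx₀ hj))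
      (hle.mono fun x hx => ?_))
  simp only [sub_re, saddle_re, heq, sub_self, sub_nonneg]
  exact hx

end Strictness

section RegionThree

lemma im_ne_zero_of_mem_interior_R3 {x : ℂ} (hx : x ∈ interior R3) : x.im ≠ 0 := by
  intro him
  have hreal : ((x.re : ℝ) : ℂ) = x := Complex.ext rfl (by simp [him])
  have hnhds : {t : ℝ | (t : ℂ) ∈ R3} ∈ 𝓝 x.re :=
    continuous_ofReal.continuousAt (by
      rw [hreal]
      exact mem_interior_iff_mem_nhds.mp hx)
  obtain ⟨t, ht0, ht⟩ := (dense_compl_singleton (0 : ℝ)).inter_nhds_nonempty hnhds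
  exact (fk_three_lt_fk_two_of_im_eq_zero ht.1 (ofReal_ne_zero.mpr ht0) (ofReal_im t)).not_ge
    ht.2.2

theorem isDominant_three_of_mem_interior_R3 {x : ℂ} (hx : x ∈ interior R3) : IsDominant 3 x := by
  obtain ⟨hx1, h13, h23⟩ := interior_subset hx
  have hx0 : x ≠ 0 := fun h => im_ne_zero_of_mem_interior_R3 hx (by rw [h, zero_im])
  have hR3 : ∀ᶠ y in 𝓝 x, y ∈ R3 := mem_interior_iff_mem_nhds.mp hx
  have hlarge (j : ℕ) (hj : 4 ≤ j) : fk j x < fk 3 x :=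
    (fk_lt_fk_one_or_fk_two hj hx1 hx0).elim h13.trans_lt' h23.trans_lt'
  have hpos : 0 < fk 3 x := (fk_nonneg 4 x).trans_lt (hlarge 4 le_rfl)
  refine ⟨hx1, hpos, fun j hj0 hj3 => ?_⟩
  rcases le_or_gt 4 j with hj | hj
  · exact hlarge j hj
  · refine fk_lt_of_eventually_fk_le hj3 hx1 hpos (hR3.mono fun y hy => ?_)
    interval_cases j
    exacts [hy.2.1, hy.2.2, le_rfl]

end RegionThree

/-! ### Asymptotics of the partition polynomials -/

section MajorArcs

variable {k : ℕ} {x₀ : ℂ}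

/-- The factor `n ^ (3 / 4) * exp (-2 √n fₖ(x))` that brings the contribution of the windows around
the primitive `k`-th roots of unity to a finite nonzero limit. -/
noncomputable def saddleWeight (k n : ℕ) (x : ℂ) : ℝ :=
  quarticRoot n ^ 3 * Real.exp (-(2 * quarticRoot n ^ 2 * fk k x))

lemma norm_windowNormalizer (k n : ℕ) (x : ℂ) (ψ : ℝ) :
    ‖windowNormalizer k n x ψ‖ = Real.exp (-(2 * quarticRoot n ^ 2 * fk k x)) := by
  rw [windowNormalizer, Complex.norm_exp, ← saddle_re, sub_re, neg_re,
    show 2 * (quarticRoot n : ℂ) ^ 2 * saddle k x =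
      (2 * quarticRoot n ^ 2 : ℝ) * saddle k x by push_cast; rfl, re_ofReal_mul]
  simp

lemma saddleWeight_nonneg (k n : ℕ) (x : ℂ) : 0 ≤ saddleWeight k n x :=
  mul_nonneg (pow_nonneg (quarticRoot_nonneg n) 3) (Real.exp_pos _).le

lemma tendsto_norm_saddleWeight_mul_windowIntegral (hx₀ : ‖x₀‖ < 1) (h : 0 < fk k x₀) {ψ : ℝ}
    (hψ : IsPrimitiveRoot (cexp (ψ * I)) k) {B : ℝ} (hB : |(saddle k x₀).im| < B * fk k x₀) :
    Tendsto (fun p : ℕ × ℂ => ‖(saddleWeight k p.1 p.2 : ℂ) * windowIntegral k B p.1 p.2 ψ‖)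
      (atTop ×ˢ 𝓝 x₀)
      (𝓝 ‖cexp (constTerm (cexp (ψ * I)) x₀) * (Real.pi / (1 / saddle k x₀)) ^ (1 / 2 : ℂ)‖) := by
  refine (tendsto_windowNormalizer_mul_windowIntegral hx₀ h hψ hB).norm.congr fun p => ?_
  rw [norm_mul, norm_mul, norm_windowNormalizer, norm_mul, norm_pow, norm_real, norm_real,
    Real.norm_of_nonneg (saddleWeight_nonneg k p.1 p.2), Real.norm_of_nonneg (quarticRoot_nonneg _),
    saddleWeight, mul_assoc (quarticRoot p.1 ^ 3)]

lemma norm_integrand (n : ℕ) (x : ℂ) (σ φ : ℝ) :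
    ‖integrand n x σ φ‖ =
      Real.exp ((logGenFun x (cexp (σ + φ * I))).re + n * σ) := by
  rw [integrand, Complex.norm_exp, add_re]
  simp

lemma tendsto_fk_div_quarticRoot_sq (hx₀ : ‖x₀‖ < 1) (h : 0 < fk k x₀) :
    Tendsto (fun p : ℕ × ℂ => fk k p.2 / quarticRoot p.1 ^ 2) (atTop ×ˢ 𝓝 x₀) (𝓝[>] 0) := by
  refine tendsto_nhdsWithin_iff.mpr ⟨(tendsto_fk_snd hx₀ h).div_atTop
    ((tendsto_pow_atTop two_ne_zero).comp (tendsto_quarticRoot.comp tendsto_fst)), ?_⟩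
  filter_upwards [tendsto_fst.eventually (eventually_ge_atTop 1),
    (tendsto_fk_snd hx₀ h).eventually (lt_mem_nhds h)] with p hp1 hp2
  exact div_pos hp2 (pow_pos (quarticRoot_pos hp1) 2)

lemma saddleWeight_mul_exp {n : ℕ} (hn : 1 ≤ n) {x : ℂ} (hx : 0 < fk k x) (M : ℝ) :
    saddleWeight k n x *
      Real.exp (M / (fk k x / quarticRoot n ^ 2) + n * (fk k x / quarticRoot n ^ 2)) =
      quarticRoot n ^ 3 * Real.exp ((M / fk k x - fk k x) * quarticRoot n ^ 2) := by
  have hτ := quarticRoot_pos hn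
  rw [saddleWeight, mul_assoc, ← Real.exp_add, ← quarticRoot_pow_four n]
  congr 2
  field_simp
  ring

lemma tendsto_saddleWeight_mul_exp (hx₀ : ‖x₀‖ < 1) (h : 0 < fk k x₀) {M : ℝ}
    (hM : M < fk k x₀ ^ 2) :
    Tendsto (fun p : ℕ × ℂ => saddleWeight k p.1 p.2 *
        Real.exp (M / (fk k p.2 / quarticRoot p.1 ^ 2) + p.1 * (fk k p.2 / quarticRoot p.1 ^ 2)))
      (atTop ×ˢ 𝓝 x₀) (𝓝 0) := by
  have hgap : Tendsto (fun p : ℕ × ℂ => M / fk k p.2 - fk k p.2) (atTop ×ˢ 𝓝 x₀)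
      (𝓝 (M / fk k x₀ - fk k x₀)) :=
    (tendsto_const_nhds.div (tendsto_fk_snd hx₀ h) h.ne').sub (tendsto_fk_snd hx₀ h)
  have hneg : M / fk k x₀ - fk k x₀ < 0 := by
    rwa [sub_neg, div_lt_iff₀ h, ← sq]
  obtain ⟨η, hη, hη0⟩ := exists_between hneg
  have hdecay : Tendsto (fun t : ℝ => t ^ 3 * Real.exp (η * t ^ 2)) atTop (𝓝 0) := by
    have hexp : Tendsto (fun t : ℝ => Real.exp (-(1 / 2) * t)) atTop (𝓝 0) :=
      Real.tendsto_exp_atBot.comp (tendsto_id.const_mul_atTop_of_neg (by norm_num))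
    have := (rpow_mul_exp_neg_mul_sq_isLittleO_exp_neg (neg_pos.mpr hη0) 3).trans_tendsto hexp
    simpa using this
  refine squeeze_zero' (Eventually.of_forall fun p =>
    mul_nonneg (saddleWeight_nonneg _ _ _) (Real.exp_pos _).le) ?_
      (hdecay.comp (tendsto_quarticRoot.comp tendsto_fst))
  filter_upwards [tendsto_fst.eventually (eventually_ge_atTop 1), hgap.eventually (gt_mem_nhds hη),
    (tendsto_fk_snd hx₀ h).eventually (lt_mem_nhds h)] with p hp1 hp2 hp3
  have hτ := quarticRoot_pos hp1
  rw [saddleWeight_mul_exp hp1 hp3, Function.comp_apply, Function.comp_apply]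
  gcongr

lemma exists_window_width (x : ℂ) (h : 0 < fk k x) :
    ∃ B : ℝ, 0 < B ∧ |(saddle k x).im| < B * fk k x ∧
      B⁻¹ * (‖dilog (x ^ k)‖ / k ^ 2) < fk k x ^ 2 := by
  have him : ∀ᶠ B : ℝ in atTop, |(saddle k x).im| < B * fk k x :=
    (tendsto_id.atTop_mul_const h).eventually_gt_atTop _
  have hinv : ∀ᶠ B : ℝ in atTop, B⁻¹ * (‖dilog (x ^ k)‖ / k ^ 2) < fk k x ^ 2 := by
    refine (tendsto_inv_atTop_zero.mul_const _).eventually (gt_mem_nhds ?_)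
    rw [zero_mul]
    exact pow_pos h 2
  exact ((eventually_gt_atTop 0).and (him.and hinv)).exists

end MajorArcs

section CubeRoots

lemma isPrimitiveRoot_exp_two_pi_div_three_mul_I :
    IsPrimitiveRoot (cexp ((2 * Real.pi / 3 : ℝ) * I)) 3 := by
  convert isPrimitiveRoot_exp 3 three_ne_zero using 2
  push_cast
  ring

lemma exp_neg_ofReal_mul_I (ψ : ℝ) : cexp ((-ψ : ℝ) * I) = (cexp (ψ * I))⁻¹ := by
  rw [← Complex.exp_neg, ofReal_neg, neg_mul]

lemma eq_or_eq_of_isPrimitiveRoot_exp_three {ψ : ℝ} (hψ : ψ ∈ Set.Icc (-Real.pi) Real.pi)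
    (h : IsPrimitiveRoot (cexp (ψ * I)) 3) :
    ψ = 2 * Real.pi / 3 ∨ ψ = -(2 * Real.pi / 3) := by
  obtain ⟨m, hm⟩ := exp_eq_one_iff.mp ((Complex.exp_nat_mul _ 3).trans h.pow_eq_one)
  have hψm : 3 * ψ = m * (2 * Real.pi) := by simpa using congrArg Complex.im hm
  have hm_le : (m : ℝ) < 2 := by nlinarith [hψ.2, Real.pi_pos]
  have hm_ge : (-2 : ℝ) < m := by nlinarith [hψ.1, Real.pi_pos]
  have hm0 : m ≠ 0 := by
    rintro rfl
    have hψ0 : ψ = 0 := by simpa using hψm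
    exact h.ne_one (by norm_num) (by simp [hψ0])
  have hm2 : m < 2 := by exact_mod_cast hm_le
  have hm2' : -2 < m := by exact_mod_cast hm_ge
  obtain rfl | rfl : m = 1 ∨ m = -1 := by lia
  · left
    push_cast at hψm
    linarith
  · right
    push_cast at hψm
    linarith

lemma mem_minorArcs_three {B σ φ : ℝ} (h₁ : B * σ ≤ |φ - 2 * Real.pi / 3|)
    (h₂ : B * σ ≤ |φ - -(2 * Real.pi / 3)|) : φ ∈ minorArcs 3 B σ := by
  intro ψ hψ hprim
  rcases eq_or_eq_of_isPrimitiveRoot_exp_three hψ hprim with rfl | rfl <;> assumption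

lemma norm_integral_sub_windows_le {f : ℝ → ℂ} (hf : Continuous f) {δ C : ℝ} (hδ0 : 0 ≤ δ)
    (hδ : δ ≤ Real.pi / 3) (h : ∀ φ ∈ Set.Icc (-Real.pi) Real.pi,
      δ ≤ |φ - 2 * Real.pi / 3| → δ ≤ |φ - -(2 * Real.pi / 3)| → ‖f φ‖ ≤ C) :
    ‖(∫ φ in (-Real.pi)..Real.pi, f φ) -
        (∫ φ in (2 * Real.pi / 3 - δ)..(2 * Real.pi / 3 + δ), f φ) -
        ∫ φ in (-(2 * Real.pi / 3) - δ)..(-(2 * Real.pi / 3) + δ), f φ‖ ≤ 2 * Real.pi * C := by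
  have hint (a b : ℝ) : IntervalIntegrable f MeasureTheory.volume a b := hf.intervalIntegrable a b
  have hπ := Real.pi_pos
  have hC : 0 ≤ C := (norm_nonneg (f 0)).trans <| h 0 ⟨by linarith, by linarith⟩
    (le_abs.mpr (.inr (by linarith))) (le_abs.mpr (.inl (by linarith)))
  have hpiece (a b : ℝ) (ha : -Real.pi ≤ a) (hab : a ≤ b) (hb : b ≤ Real.pi)
      (hfar : ∀ φ ∈ Set.Ioc a b, δ ≤ |φ - 2 * Real.pi / 3| ∧ δ ≤ |φ - -(2 * Real.pi / 3)|) :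
      ‖∫ φ in a..b, f φ‖ ≤ C * (b - a) := by
    rw [← abs_of_nonneg (sub_nonneg.mpr hab)]
    refine intervalIntegral.norm_integral_le_of_norm_le_const fun φ hφ => ?_
    rw [Set.uIoc_of_le hab] at hφ
    exact h φ ⟨ha.trans hφ.1.le, hφ.2.trans hb⟩ (hfar φ hφ).1 (hfar φ hφ).2
  have hleft := hpiece (-Real.pi) (-(2 * Real.pi / 3) - δ) le_rfl (by linarith) (by linarith)
    fun φ hφ => ⟨le_abs.mpr (.inr (by linarith [hφ.2])), le_abs.mpr (.inr (by linarith [hφ.2]))⟩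
  have hmid := hpiece (-(2 * Real.pi / 3) + δ) (2 * Real.pi / 3 - δ) (by linarith) (by linarith)
    (by linarith)
    fun φ hφ => ⟨le_abs.mpr (.inr (by linarith [hφ.2])), le_abs.mpr (.inl (by linarith [hφ.1]))⟩
  have hright := hpiece (2 * Real.pi / 3 + δ) Real.pi (by linarith) (by linarith) le_rfl
    fun φ hφ => ⟨le_abs.mpr (.inl (by linarith [hφ.1])), le_abs.mpr (.inl (by linarith [hφ.1]))⟩
  have hsplit (a b c : ℝ) := intervalIntegral.integral_add_adjacent_intervals (hint a b) (hint b c)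
  rw [← hsplit (-Real.pi) (-(2 * Real.pi / 3) - δ), ← hsplit _ (-(2 * Real.pi / 3) + δ) Real.pi,
    ← hsplit _ (2 * Real.pi / 3 - δ) Real.pi, ← hsplit _ (2 * Real.pi / 3 + δ) Real.pi]
  calc _ = ‖(∫ φ in (-Real.pi)..(-(2 * Real.pi / 3) - δ), f φ) +
        (∫ φ in (-(2 * Real.pi / 3) + δ)..(2 * Real.pi / 3 - δ), f φ) +
        ∫ φ in (2 * Real.pi / 3 + δ)..Real.pi, f φ‖ := congrArg _ (by ring)
    _ ≤ _ := norm_add₃_le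
    _ ≤ 2 * Real.pi * C := by linarith [mul_nonneg hC hδ0]

end CubeRoots

section Assembly

variable {x₀ : ℂ}

lemma exists_eventually_norm_mem_Icc {α E : Type*} [NormedAddCommGroup E] {l : Filter α}
    {w u v : α → E} {a b : ℝ} (hab : a ≠ b) (hu : Tendsto (fun p => ‖u p‖) l (𝓝 a))
    (hv : Tendsto (fun p => ‖v p‖) l (𝓝 b)) (hw : Tendsto (fun p => w p - u p - v p) l (𝓝 0)) :
    ∃ c > 0, ∃ C, ∀ᶠ p in l, ‖w p‖ ∈ Set.Icc c C := by
  have hlower : Tendsto (fun p => |‖u p‖ - ‖v p‖| - ‖w p - u p - v p‖) l (𝓝 |a - b|) := by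
    simpa using (hu.sub hv).abs.sub hw.norm
  have hupper : Tendsto (fun p => ‖w p - u p - v p‖ + ‖u p‖ + ‖v p‖) l (𝓝 (a + b)) := by
    simpa using (hw.norm.add hu).add hv
  have hpos : 0 < |a - b| := abs_pos.mpr (sub_ne_zero.mpr hab)
  refine ⟨|a - b| / 2, half_pos hpos, a + b + 1, ?_⟩
  filter_upwards [hlower.eventually (lt_mem_nhds (half_lt_self hpos)),
    hupper.eventually (gt_mem_nhds (lt_add_one (a + b)))] with p hp1 hp2
  constructor
  · have huv := abs_norm_sub_norm_le (u p) (-v p)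
    have hsum := norm_sub_le (w p) (w p - u p - v p)
    rw [norm_neg, sub_neg_eq_add] at huv
    rw [show w p - (w p - u p - v p) = u p + v p by abel] at hsum
    linarith
  · have hsum := norm_add₃_le (a := w p - u p - v p) (b := u p) (c := v p)
    rw [show w p - u p - v p + u p + v p = w p by abel] at hsum
    exact hsum.trans hp2.le

lemma tendsto_saddleWeight_mul_sub_windowIntegrals (hdom : IsDominant 3 x₀) {B : ℝ} (hB : 0 < B)
    (hBk : B⁻¹ * (‖dilog (x₀ ^ 3)‖ / (3 : ℕ) ^ 2) < fk 3 x₀ ^ 2) :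
    Tendsto (fun p : ℕ × ℂ => (saddleWeight 3 p.1 p.2 : ℂ) * (2 * Real.pi * F p.1 p.2) -
        saddleWeight 3 p.1 p.2 * windowIntegral 3 B p.1 p.2 (2 * Real.pi / 3) -
        saddleWeight 3 p.1 p.2 * windowIntegral 3 B p.1 p.2 (-(2 * Real.pi / 3)))
      (atTop ×ˢ 𝓝 x₀) (𝓝 0) := by
  obtain ⟨hx₀, hpos, -⟩ := id hdom
  obtain ⟨M, hM, hgap⟩ := hdom.exists_eventually_minorArcs_re_logGenFun_lt hB hBk
  have hσ := tendsto_fk_div_quarticRoot_sq hx₀ hpos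
  have hδ : ∀ᶠ p : ℕ × ℂ in atTop ×ˢ 𝓝 x₀, B * (fk 3 p.2 / quarticRoot p.1 ^ 2) < Real.pi / 3 := by
    refine ((tendsto_nhdsWithin_iff.mp hσ).1.const_mul B).eventually (gt_mem_nhds ?_)
    rw [mul_zero]
    exact div_pos Real.pi_pos three_pos
  have hdecay := (tendsto_saddleWeight_mul_exp hx₀ hpos hM).const_mul (2 * Real.pi)
  rw [mul_zero] at hdecay
  refine squeeze_zero_norm' ?_ hdecay
  filter_upwards [hδ, (hσ.prodMk tendsto_snd).eventually hgap, (tendsto_nhdsWithin_iff.mp hσ).2,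
    tendsto_fst.eventually (eventually_ge_atTop 1),
    tendsto_snd.norm.eventually (gt_mem_nhds hx₀)] with p hpδ hpgap hpσ hpn hpx
  rw [two_pi_mul_F_eq_integral hpn hpx hpσ, ← mul_sub, ← mul_sub, norm_mul, norm_real,
    Real.norm_of_nonneg (saddleWeight_nonneg _ _ _), mul_left_comm (2 * Real.pi)]
  refine mul_le_mul_of_nonneg_left ?_ (saddleWeight_nonneg _ _ _)
  refine norm_integral_sub_windows_le (continuous_integrand p.1 hpx hpσ)
    (mul_pos hB hpσ).le hpδ.le fun φ hφ h₁ h₂ => ?_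
  rw [norm_integrand, Real.exp_le_exp, add_le_add_iff_right, le_div_iff₀' hpσ]
  exact (hpgap φ hφ (mem_minorArcs_three h₁ h₂)).le

theorem exists_eventually_norm_saddleWeight_mul_F_mem_Icc (hdom : IsDominant 3 x₀)
    (him : x₀.im ≠ 0) :
    ∃ c > 0, ∃ C, ∀ᶠ p : ℕ × ℂ in atTop ×ˢ 𝓝 x₀,
      ‖(saddleWeight 3 p.1 p.2 : ℂ) * (2 * Real.pi * F p.1 p.2)‖ ∈ Set.Icc c C := by
  obtain ⟨hx₀, hpos, -⟩ := id hdom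
  obtain ⟨B, hB, hBim, hBk⟩ := exists_window_width x₀ hpos
  have hprim := isPrimitiveRoot_exp_two_pi_div_three_mul_I
  have hprim' : IsPrimitiveRoot (cexp ((-(2 * Real.pi / 3) : ℝ) * I)) 3 := by
    rw [exp_neg_ofReal_mul_I]
    exact hprim.inv
  refine exists_eventually_norm_mem_Icc ?_
    (tendsto_norm_saddleWeight_mul_windowIntegral hx₀ hpos hprim hBim)
    (tendsto_norm_saddleWeight_mul_windowIntegral hx₀ hpos hprim' hBim)
    (tendsto_saddleWeight_mul_sub_windowIntegrals hdom hB hBk)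
  have hsaddle : saddle 3 x₀ ≠ 0 := fun h0 => hpos.ne' (by rw [← saddle_re, h0, zero_re])
  have hgauss : ((Real.pi : ℂ) / (1 / saddle 3 x₀)) ^ (1 / 2 : ℂ) ≠ 0 := by
    simp [cpow_eq_zero_iff, hsaddle, Real.pi_ne_zero]
  rw [norm_mul, norm_mul, exp_neg_ofReal_mul_I, Complex.norm_exp, Complex.norm_exp, Ne,
    mul_left_inj' (norm_ne_zero_iff.mpr hgauss), Real.exp_eq_exp]
  exact constTerm_re_ne hprim hx₀ him

lemma log_norm_F_div_sub_fk {k n : ℕ} (hn : 1 ≤ n) {x : ℂ} (hF : F n x ≠ 0) :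
    Real.log ‖F n x‖ / (2 * √n) - fk k x =
      (Real.log ‖(saddleWeight k n x : ℂ) * (2 * Real.pi * F n x)‖ - Real.log (2 * Real.pi) -
        3 * Real.log (quarticRoot n)) / (2 * quarticRoot n ^ 2) := by
  have hτ := quarticRoot_pos hn
  have hnorm : ‖(saddleWeight k n x : ℂ) * (2 * Real.pi * F n x)‖ =
      quarticRoot n ^ 3 * (Real.exp (-(2 * quarticRoot n ^ 2 * fk k x)) *
        (2 * Real.pi * ‖F n x‖)) := by
    rw [norm_mul, norm_real, Real.norm_of_nonneg (saddleWeight_nonneg k n x), saddleWeight,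
      mul_assoc, norm_mul, norm_mul, norm_real, Real.norm_of_nonneg Real.pi_pos.le,
      Complex.norm_ofNat]
  have hF' := norm_ne_zero_iff.mpr hF
  rw [hnorm, Real.log_mul (by positivity) (by positivity), Real.log_mul (by positivity)
    (by positivity), Real.log_mul (by positivity) hF', Real.log_exp, Real.log_pow, ← quarticRoot_sq]
  field_simp
  push_cast
  ring

lemma tendsto_sub_log_quarticRoot_div (A : ℝ) :
    Tendsto (fun n => (A - 3 * Real.log (quarticRoot n)) / (2 * quarticRoot n ^ 2)) atTop
      (𝓝 0) := by
  have hconst : Tendsto (fun t : ℝ => A / 2 / t ^ 2) atTop (𝓝 0) :=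
    (tendsto_pow_atTop two_ne_zero).const_div_atTop _
  have hlog : Tendsto (fun t : ℝ => Real.log t / t ^ 2) atTop (𝓝 0) := by
    simpa using (isLittleO_log_rpow_atTop (zero_lt_two (α := ℝ))).tendsto_div_nhds_zero
  have := (hconst.sub (hlog.const_mul (3 / 2))).comp tendsto_quarticRoot
  simp only [mul_zero, sub_zero] at this
  refine this.congr fun n => ?_
  rw [Function.comp_apply]
  ring

lemma tendsto_log_norm_F_div_sub_fk {k : ℕ} {c C : ℝ} (hc : 0 < c)
    (h : ∀ᶠ p : ℕ × ℂ in atTop ×ˢ 𝓝 x₀,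
      ‖(saddleWeight k p.1 p.2 : ℂ) * (2 * Real.pi * F p.1 p.2)‖ ∈ Set.Icc c C) :
    Tendsto (fun p : ℕ × ℂ => Real.log ‖F p.1 p.2‖ / (2 * √p.1) - fk k p.2)
      (atTop ×ˢ 𝓝 x₀) (𝓝 0) := by
  have hbound (A : ℝ) :=
    (tendsto_sub_log_quarticRoot_div (Real.log A - Real.log (2 * Real.pi))).comp
      (tendsto_fst (f := (atTop : Filter ℕ)) (g := 𝓝 x₀))
  have hexpand : ∀ᶠ p : ℕ × ℂ in atTop ×ˢ 𝓝 x₀,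
      0 < ‖(saddleWeight k p.1 p.2 : ℂ) * (2 * Real.pi * F p.1 p.2)‖ ∧
      Real.log ‖F p.1 p.2‖ / (2 * √p.1) - fk k p.2 =
        (Real.log ‖(saddleWeight k p.1 p.2 : ℂ) * (2 * Real.pi * F p.1 p.2)‖ -
          Real.log (2 * Real.pi) - 3 * Real.log (quarticRoot p.1)) / (2 * quarticRoot p.1 ^ 2) := by
    filter_upwards [h, tendsto_fst.eventually (eventually_ge_atTop 1)] with p hp hpn
    have hpos := hc.trans_le hp.1
    exact ⟨hpos, log_norm_F_div_sub_fk hpn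
      (right_ne_zero_of_mul (right_ne_zero_of_mul (norm_pos_iff.mp hpos)))⟩
  refine tendsto_of_tendsto_of_tendsto_of_le_of_le' (hbound c) (hbound C) ?_ ?_
  · filter_upwards [h, hexpand] with p hp hpe
    rw [hpe.2, Function.comp_apply]
    gcongr
    exact hp.1
  · filter_upwards [h, hexpand] with p hp hpe
    obtain ⟨hpos, heq⟩ := hpe
    rw [heq, Function.comp_apply]
    gcongr
    exact hp.2

lemma tendstoLocallyUniformlyOn_log_norm_F_div :
    TendstoLocallyUniformlyOn (fun (n : ℕ) (z : ℂ) => Real.log ‖F n z‖ / (2 * √n)) (fk 3) atTop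
      (interior R3) := by
  refine Metric.tendstoLocallyUniformlyOn_iff.mpr fun ε hε x hx => ?_
  obtain ⟨c, hc, C, hbounds⟩ := exists_eventually_norm_saddleWeight_mul_F_mem_Icc
    (isDominant_three_of_mem_interior_R3 hx) (im_ne_zero_of_mem_interior_R3 hx)
  obtain ⟨P, hP, Q, hQ, hPQ⟩ := eventually_prod_iff.mp
    ((tendsto_log_norm_F_div_sub_fk hc hbounds).eventually (Metric.ball_mem_nhds 0 hε))
  refine ⟨{y | Q y}, mem_nhdsWithin_of_mem_nhds hQ, hP.mono fun n hn y hy => ?_⟩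
  have := hPQ hn hy
  rwa [dist_zero_right, ← dist_eq_norm, dist_comm] at this

end Assembly

end PartitionPolynomial

/-- On region R(3): uniformly on compact subsets of the interior of R(3),
ln|Fₙ(z)|/(2√n) → (1/3)·Re √(Li₂(z^3)). -/
theorem sqrt_n_asymptotics_region_3 (K : Set ℂ) (hK : K ⊆ interior R3) (hKc : IsCompact K) :
    TendstoUniformlyOn (fun (n : ℕ) (z : ℂ) => Real.log ‖F n z‖ / (2 * Real.sqrt n))
      (fun z : ℂ => (1 / (3 : ℝ)) * ((dilog (z ^ 3)) ^ (1 / 2 : ℂ)).re) atTop K :=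
  (tendstoLocallyUniformlyOn_iff_tendstoUniformlyOn_of_compact hKc).mp
    (PartitionPolynomial.tendstoLocallyUniformlyOn_log_norm_F_div.mono hK)
end

section
/- Let h, k be relatively prime integers with 0 ≤ h < k, and fix a complex x with |x| < 1. The double series Q_{h,k}(s) = ∑_{m≥1} ∑_{l≥1} (x^l e^{2πi l m h/k}/l)·(lm)^{−s} converges absolutely for Re(s) > 1, and there exists a function Q̃ holomorphic on ℂ ∖ {1} that agrees with this series for Re(s) > 1, such that (s−1)·Q̃(s) extends holomorphically across s = 1 with value Li₂(x^k)/k² at s = 1 (i.e., Q̃ has a simple pole at s = 1 with residue Li₂(x^k)/k²), and Q̃(0) = (1/(2k))·ln(1 − x^k) + ∑_{l ≥ 1, k ∤ l} (x^l/l)·1/(e^{−2πi l h/k} − 1). -/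
open Complex Filter Real

/-- The term of the double series `Q_{h,k}(s)` indexed by `(m,l) = (p.1+1, p.2+1)`:
`(x^l e^{2πi l m h/k}/l)·(lm)^{-s}`. -/
noncomputable def Qterm (h k : ℕ) (x : ℂ) (s : ℂ) (p : ℕ × ℕ) : ℂ :=
  x ^ (p.2 + 1) * Complex.exp (2 * Real.pi * Complex.I * (p.2 + 1) * (p.1 + 1) * h / k) /
    (p.2 + 1) * (((p.2 + 1) * (p.1 + 1) : ℂ)) ^ (-s)

/-!
Summing over `m` first turns the double series into `∑ₗ (xˡ / l) l⁻ˢ F(l h / k, s)`, where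
`F(a, s) = ∑ₘ e^{2πi m a} m⁻ˢ` is the periodic zeta function (`expZeta` in Mathlib). As
`l ↦ l h / k` is periodic modulo `1`, this is a finite combination of periodic zeta functions whose
coefficients are Dirichlet series, entire in `s` because `‖x‖ < 1`. Only the classes with `k ∣ l`,
where `F` is the Riemann zeta function, contribute to the pole. At `s = 0` one uses `ζ(0) = -1/2`
and, for `a ∉ ℤ`, `F(a, 0) = 1 / (e^{-2πi a} - 1)`. By the functional equation the latter amounts to
`hurwitzZetaOdd a 1 = π cot (π a) / 2`, which is the Mittag-Leffler expansion of the cotangent once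
the terms of index `m` and `-m` are paired to make the series converge up to `s = 1`.
-/

section Sums

variable {M : Type*} [AddCommMonoid M] [TopologicalSpace M]

theorem tsum_succ_of_apply_zero {f : ℕ → M} (hf : f 0 = 0) : ∑' n, f (n + 1) = ∑' n, f n :=
  Nat.succ_injective.tsum_eq fun n hn =>
    ⟨n - 1, Nat.succ_pred <| by rintro rfl; exact hn hf⟩

theorem tsum_ite_dvd {d : ℕ} (hd : d ≠ 0) (f : ℕ → M) :
    ∑' n, (if d ∣ n then f n else 0) = ∑' j, f (d * j) := by
  have hsupp : Function.support (fun n => if d ∣ n then f n else 0) ⊆ Set.range (d * ·) := by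
    intro n hn
    obtain ⟨j, rfl⟩ : d ∣ n := by_contra fun h => hn (if_neg h)
    exact ⟨j, rfl⟩
  simpa using ((mul_right_injective₀ hd).tsum_eq hsupp).symm

theorem tsum_eq_tsum_mul_add_tsum_not_dvd {E : Type*} [AddCommGroup E] [UniformSpace E]
    [IsUniformAddGroup E] [CompleteSpace E] [T2Space E] {d : ℕ} (hd : d ≠ 0) {f : ℕ → E}
    (hf : Summable f) :
    ∑' n, f n = ∑' j, f (d * j) + ∑' n, (if d ∣ n then 0 else f n) := by
  rw [← tsum_ite_dvd hd]
  convert! hf.tsum_subtype_add_tsum_subtype_compl {n | d ∣ n} |>.symm using 2 <;>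
    rw [tsum_subtype] <;>
    simp [Set.indicator_apply, ite_not]

theorem hasSum_comp_succ_iff {f : ℕ × ℕ → M} (hf : ∀ p, p.1 = 0 ∨ p.2 = 0 → f p = 0) {a : M} :
    HasSum (f ∘ Prod.map Nat.succ Nat.succ) a ↔ HasSum f a :=
  (Nat.succ_injective.prodMap Nat.succ_injective).hasSum_iff fun p hp => hf p <| by
    by_contra! h
    exact hp ⟨(p.1 - 1, p.2 - 1), Prod.ext (Nat.succ_pred h.1) (Nat.succ_pred h.2)⟩

end Sums

section PeriodicZeta

open HurwitzZeta AddCircle Topology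

theorem abs_rpow_neg_sub_rpow_neg_le {b u v σ : ℝ} (hb : 0 < b) (hσ : 0 ≤ σ) (hu : b ≤ u)
    (hv : b ≤ v) : |u ^ (-σ) - v ^ (-σ)| ≤ σ * b ^ (-σ - 1) * |u - v| := by
  have hpos {w : ℝ} (hw : w ∈ Set.Ici b) : 0 < w := hb.trans_le hw
  refine (convex_Ici b).norm_image_sub_le_of_norm_hasDerivWithin_le
    (fun w hw => (hasDerivAt_rpow_const (Or.inl (hpos hw).ne')).hasDerivWithinAt)
    (fun w hw => ?_) hv hu
  rw [norm_mul, norm_neg, norm_of_nonneg hσ, norm_of_nonneg (rpow_nonneg (hpos hw).le _)]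
  exact mul_le_mul_of_nonneg_left (rpow_le_rpow_of_nonpos hb hw (by linarith)) hσ

/-- The contribution of the integers `n + 1` and `-(n + 1)` to the series
`∑ sign (m + a) / |m + a| ^ σ / 2` over `m : ℤ` that defines `hurwitzZetaOdd a σ` for `σ > 1`.
Paired in this way, the series still converges at `σ = 1`. -/
noncomputable def hurwitzOddPair (a σ : ℝ) (n : ℕ) : ℂ :=
  (((n + 1 + a) ^ (-σ) - (n + 1 - a) ^ (-σ) : ℝ) : ℂ) / 2

theorem hasSum_hurwitzOddPair {a σ : ℝ} (ha₀ : 0 < a) (ha₁ : a < 1) (hσ : 1 < σ) :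
    HasSum (hurwitzOddPair a σ) (hurwitzZetaOdd a σ - ((a ^ (-σ) : ℝ) : ℂ) / 2) := by
  have hterm {u : ℝ} (hu : 0 < u) :
      (SignType.sign u : ℂ) / ((|u| : ℝ) : ℂ) ^ (σ : ℂ) = ((u ^ (-σ) : ℝ) : ℂ) := by
    simp [sign_pos hu, abs_of_pos hu, rpow_neg hu.le, ofReal_cpow hu.le]
  have hsum := (hasSum_nat_add_iff' 1).mpr
    (hasSum_int_hurwitzZetaOdd a (s := σ) (by simpa using hσ)).nat_add_neg
  convert! hsum using 1
  · funext n
    have hplus : 0 < (n : ℝ) + 1 + a := by positivity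
    have hminus : 0 < (n : ℝ) + 1 - a := by linarith [n.cast_nonneg (α := ℝ)]
    rw [show ((-((n + 1 : ℕ) : ℤ) : ℤ) : ℝ) + a = -(n + 1 - a) by push_cast; ring,
      show (((n + 1 : ℕ) : ℤ) : ℝ) + a = n + 1 + a by push_cast; ring, Left.sign_neg, abs_neg,
      SignType.coe_neg, neg_div, hurwitzOddPair, hterm hplus, hterm hminus, ofReal_sub]
    ring
  · simp only [Finset.sum_range_one, Nat.cast_zero, neg_zero, Int.cast_zero, zero_add, hterm ha₀]
    ring

theorem norm_hurwitzOddPair_le {a σ : ℝ} (ha₀ : 0 < a) (ha₁ : a < 1) (hσ : σ ∈ Set.Icc 1 2)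
    (n : ℕ) : ‖hurwitzOddPair a σ n‖ ≤ 2 * a * ((1 - a)⁻¹ * (1 / |n + (1 - a)| ^ (2 : ℝ))) := by
  obtain ⟨hσ₁, hσ₂⟩ := hσ
  have hc : 0 < 1 - a := sub_pos.mpr ha₁
  set b : ℝ := n + (1 - a)
  have hcb : 1 - a ≤ b := le_add_of_nonneg_left n.cast_nonneg
  have hb₀ : 0 < b := hc.trans_le hcb
  have hdiff : |(n + 1 + a) ^ (-σ) - (n + 1 - a) ^ (-σ)| ≤ σ * b ^ (-σ - 1) * (2 * a) := by
    convert abs_rpow_neg_sub_rpow_neg_le hb₀ (zero_le_one.trans hσ₁)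
      (show b ≤ n + 1 + a by linarith) (show b ≤ n + 1 - a by linarith)
    rw [add_sub_sub_cancel, abs_of_pos (by linarith), two_mul]
  have hpow : b ^ (-σ - 1) ≤ (1 - a)⁻¹ * (1 / |b| ^ (2 : ℝ)) := by
    have hfactor : b ^ (-(σ - 1)) ≤ (1 - a)⁻¹ := calc
      b ^ (-(σ - 1)) ≤ (1 - a) ^ (-(σ - 1)) := rpow_le_rpow_of_nonpos hc hcb (by linarith)
      _ ≤ (1 - a) ^ (-1 : ℝ) := rpow_le_rpow_of_exponent_ge hc (by linarith) (by linarith)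
      _ = (1 - a)⁻¹ := rpow_neg_one _
    rw [show -σ - 1 = -(σ - 1) + -2 by ring, rpow_add hb₀, abs_of_pos hb₀, one_div,
      ← rpow_neg hb₀.le]
    gcongr
  rw [hurwitzOddPair, norm_div, norm_real, Complex.norm_ofNat, norm_eq_abs, div_le_iff₀ two_pos]
  calc _ ≤ σ * b ^ (-σ - 1) * (2 * a) := hdiff
    _ ≤ 2 * b ^ (-σ - 1) * (2 * a) := by gcongr
    _ ≤ 2 * ((1 - a)⁻¹ * (1 / |b| ^ (2 : ℝ))) * (2 * a) := by gcongr
    _ = _ := by ring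

theorem continuousOn_tsum_hurwitzOddPair {a : ℝ} (ha₀ : 0 < a) (ha₁ : a < 1) :
    ContinuousOn (fun σ => ∑' n, hurwitzOddPair a σ n) (Set.Icc 1 2) := by
  refine continuousOn_tsum (fun n => ?_)
    ((((summable_one_div_nat_add_rpow _ _).mpr one_lt_two).mul_left _).mul_left _)
    fun n σ hσ => norm_hurwitzOddPair_le ha₀ ha₁ hσ n
  have hplus : (n + 1 + a : ℝ) ≠ 0 := by positivity
  have hminus : (n + 1 - a : ℝ) ≠ 0 := by linarith [n.cast_nonneg (α := ℝ)]
  unfold hurwitzOddPair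
  fun_prop (disch := assumption)

theorem ofReal_mem_integerComplement {a : ℝ} (ha₀ : 0 < a) (ha₁ : a < 1) :
    (a : ℂ) ∈ Complex.integerComplement := by
  rintro ⟨m, hm⟩
  have hm' : (m : ℝ) = a := by exact_mod_cast hm
  have h₀ : 0 < m := by exact_mod_cast hm' ▸ ha₀
  have h₁ : m < 1 := by exact_mod_cast hm' ▸ ha₁
  omega

theorem tsum_hurwitzOddPair_one {a : ℝ} (ha₀ : 0 < a) (ha₁ : a < 1) :
    ∑' n, hurwitzOddPair a 1 n = (π * Complex.cot (π * a) - 1 / a) / 2 := by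
  rw [cot_series_rep' (ofReal_mem_integerComplement ha₀ ha₁), ← tsum_div_const]
  refine tsum_congr fun n => ?_
  rw [hurwitzOddPair, rpow_neg_one, rpow_neg_one, ← neg_sub ((n : ℂ) + 1),
    one_div_neg_eq_neg_one_div]
  push_cast
  ring

theorem hurwitzZetaOdd_one {a : ℝ} (ha₀ : 0 < a) (ha₁ : a < 1) :
    hurwitzZetaOdd a 1 = π * Complex.cot (π * a) / 2 := by
  have hcont : ContinuousOn (fun σ : ℝ => hurwitzZetaOdd a σ - ((a ^ (-σ) : ℝ) : ℂ) / 2)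
      (Set.Icc 1 2) := by
    have hzeta := (differentiable_hurwitzZetaOdd (a : UnitAddCircle)).continuous
    have ha := ha₀.ne'
    fun_prop (disch := assumption)
  have heq : Set.EqOn (fun σ : ℝ => hurwitzZetaOdd a σ - ((a ^ (-σ) : ℝ) : ℂ) / 2)
      (fun σ => ∑' n, hurwitzOddPair a σ n) (Set.Icc 1 2) :=
    Set.EqOn.of_subset_closure (s := Set.Ioc 1 2)
      (fun σ hσ => (hasSum_hurwitzOddPair ha₀ ha₁ hσ.1).tsum_eq.symm) hcont
      (continuousOn_tsum_hurwitzOddPair ha₀ ha₁)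
      Set.Ioc_subset_Icc_self (closure_Ioc (by norm_num)).ge
  have h := (heq (Set.left_mem_Icc.mpr one_le_two)).trans (tsum_hurwitzOddPair_one ha₀ ha₁)
  simp only [ofReal_one, rpow_neg_one, ofReal_inv, one_div] at h
  linear_combination h

theorem sinZeta_apply_zero {a : ℝ} (ha₀ : 0 < a) (ha₁ : a < 1) :
    sinZeta a 0 = Complex.cot (π * a) / 2 := by
  have h := sinZeta_one_sub a (s := 1) fun n h => by
    have : (1 : ℝ) = -n := by exact_mod_cast h
    linarith [n.cast_nonneg (α := ℝ)]
  rw [sub_self, hurwitzZetaOdd_one ha₀ ha₁, cpow_neg_one, Complex.Gamma_one, mul_one, mul_one,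
    Complex.sin_pi_div_two, mul_one] at h
  rw [h]
  field_simp

theorem coe_toCircle_coe (a : ℝ) : (toCircle (a : UnitAddCircle) : ℂ) = cexp (2 * π * I * a) := by
  rw [toCircle_apply_mk, Circle.coe_exp, div_one]
  push_cast
  ring_nf

theorem expZeta_apply_zero {θ : UnitAddCircle} (hθ : θ ≠ 0) :
    expZeta θ 0 = 1 / ((toCircle θ : ℂ)⁻¹ - 1) := by
  obtain ⟨a, ⟨ha₀, ha₁⟩, rfl⟩ := eq_coe_Ico θ
  have hpos : 0 < a := ha₀.lt_of_ne fun h => hθ (by rw [← h, QuotientAddGroup.mk_zero])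
  have hne : cexp (2 * π * I * a) ≠ 1 := fun h => hθ <| injective_toCircle one_ne_zero <| by
    rw [Circle.ext_iff, coe_toCircle_coe, h, toCircle_zero, Circle.coe_one]
  rw [expZeta, cosZeta_apply_zero, sinZeta_apply_zero hpos ha₁, Complex.cot_pi_eq_exp_ratio,
    coe_toCircle_coe]
  have := Complex.exp_ne_zero (2 * π * I * a)
  generalize cexp (2 * π * I * a) = z at *
  have : 1 - z ≠ 0 := sub_ne_zero.mpr hne.symm
  have : z⁻¹ - 1 ≠ 0 := sub_ne_zero.mpr (inv_ne_one.mpr hne)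
  field_simp
  ring

theorem LSeriesHasSum_toCircle_nsmul (θ : UnitAddCircle) {s : ℂ} (hs : 1 < s.re) :
    LSeriesHasSum (fun m => (toCircle (m • θ) : ℂ)) s (expZeta θ s) := by
  obtain ⟨a, -, rfl⟩ := eq_coe_Ico θ
  refine (LSeriesHasSum_congr s _ fun {m} _ => ?_).mpr (LSeriesHasSum_exp a hs)
  rw [← coe_nsmul, coe_toCircle_coe]
  push_cast
  ring_nf

theorem tendsto_sub_one_mul_expZeta (θ : UnitAddCircle) :
    Tendsto (fun s => (s - 1) * expZeta θ s) (𝓝[≠] 1) (𝓝 (if θ = 0 then 1 else 0)) := by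
  split_ifs with hθ
  · rw [hθ, expZeta_zero]
    exact riemannZeta_residue_one
  · have hcont : ContinuousAt (fun s => (s - 1) * expZeta θ s) 1 :=
      ((continuous_id.sub continuous_const).mul
        (differentiable_expZeta_of_ne_zero hθ).continuous).continuousAt
    simpa using hcont.tendsto.mono_left nhdsWithin_le_nhds

end PeriodicZeta

open Topology in
theorem exists_differentiable_eq_sub_mul {f : ℂ → ℂ} {c R : ℂ} (hf : DifferentiableOn ℂ f {c}ᶜ)
    (hR : Tendsto (fun s => (s - c) * f s) (𝓝[≠] c) (𝓝 R)) :
    ∃ g : ℂ → ℂ, Differentiable ℂ g ∧ (∀ s, s ≠ c → g s = (s - c) * f s) ∧ g c = R := by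
  refine ⟨Function.update (fun s => (s - c) * f s) c R, ?_,
    fun s hs => Function.update_of_ne hs _ _, Function.update_self _ _ _⟩
  rw [← differentiableOn_univ,
    ← Complex.differentiableOn_compl_singleton_and_continuousAt_iff (c := c) univ_mem]
  refine ⟨?_, continuousAt_update_same.mpr hR⟩
  rw [← Set.compl_eq_univ_sdiff]
  exact ((differentiable_id.sub_const c).differentiableOn.mul hf).congr
    fun s hs => Function.update_of_ne hs _ _

section DirichletSeries

open LSeries

variable {c : ℕ → ℂ}

theorem LSeriesSummable_of_norm_le_pow {r : ℝ} (hr : r < 1) (hc : ∀ n, ‖c n‖ ≤ r ^ n) (s : ℂ) :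
    LSeriesSummable c s := by
  have hr₀ : 0 ≤ r := by simpa using (norm_nonneg _).trans (hc 1)
  obtain ⟨K, hK⟩ := exists_nat_gt (1 - s.re)
  refine LSeriesSummable_of_isBigO_rpow (x := 1 - K) (by linarith) ?_
  have hdecay : (fun n : ℕ => (n : ℝ) ^ K * r ^ n) =O[atTop] fun _ => (1 : ℝ) :=
    (tendsto_pow_const_mul_const_pow_of_lt_one K hr₀ hr).isBigO_one ℝ
  have hprod := (Asymptotics.isBigO_refl (fun n : ℕ => (n : ℝ) ^ (-(K : ℝ))) atTop).mul hdecay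
  refine (Asymptotics.IsBigO.of_bound' ?_).trans (by simpa [rpow_neg, rpow_natCast] using hprod)
  filter_upwards [eventually_ne_atTop 0] with n hn
  have hn₀ : (n : ℝ) ^ K ≠ 0 := by positivity
  rw [inv_mul_cancel_left₀ hn₀]
  exact (hc n).trans (le_abs_self _)

theorem LSeries_differentiable (hc : ∀ s, LSeriesSummable c s) : Differentiable ℂ (LSeries c) :=
  fun s => (LSeries_hasDerivAt <| (hc (s - 1)).abscissaOfAbsConv_le.trans_lt <|
    EReal.coe_lt_coe_iff.mpr (by simp)).differentiableAt

theorem LSeriesSummable_indicator {s : ℂ} (hc : LSeriesSummable c s) (A : Set ℕ) :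
    LSeriesSummable (A.indicator c) s :=
  .of_norm <| hc.norm.of_nonneg_of_le (fun _ => norm_nonneg _) fun n =>
    norm_term_le s (norm_indicator_le_norm_self c n)

theorem term_mul_eq_mul_term (F : ℕ → ℂ) (s : ℂ) (n : ℕ) :
    term (fun l => c l * F l) s n = F n * term c s n := by
  simp only [term_def, mul_ite, mul_zero]
  split_ifs <;> ring

theorem LSeriesHasSum_mul_periodic {F : ℕ → ℂ} {d : ℕ} (hF : Function.Periodic F d)
    (hd : d ≠ 0) {s : ℂ} (hc : LSeriesSummable c s) :
    LSeriesHasSum (fun n => c n * F n) s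
      (∑ r ∈ Finset.range d, F r * LSeries ({n | n % d = r}.indicator c) s) := by
  have hsum := hasSum_sum (s := Finset.range d) fun r _ =>
    (LSeriesSummable_indicator hc {n | n % d = r}).hasSum.mul_left (F r)
  refine hsum.congr_fun fun n => ?_
  rw [term_mul_eq_mul_term, ← hF.map_mod_nat n, Finset.sum_eq_single (n % d)]
  · simp [term_def]
  · intro r _ hr
    simp [term_def, hr.symm]
  · exact fun h => absurd (Finset.mem_range.mpr (n.mod_lt hd.bot_lt)) h

end DirichletSeries

section Continuation

open HurwitzZeta AddCircle LSeries Topology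

variable {c : ℕ → ℂ} {θ : UnitAddCircle}

/-- The function `s ↦ ∑ₗ c(l) l⁻ˢ ∑ₘ e(lmθ) m⁻ˢ`, whose inner sum over `m` has been replaced by its
analytic continuation `expZeta (l • θ) s`. -/
noncomputable def expZetaLSeries (c : ℕ → ℂ) (θ : UnitAddCircle) (s : ℂ) : ℂ :=
  LSeries (fun l => c l * expZeta (l • θ) s) s

theorem summable_norm_toCircle_term_mul_term (θ : UnitAddCircle) {s : ℂ} (hs : 1 < s.re)
    (hc : LSeriesSummable c s) :
    Summable fun p : ℕ × ℕ =>
      ‖term (fun m => (toCircle (m • p.2 • θ) : ℂ)) s p.1 * term c s p.2‖ := by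
  refine ((LSeriesSummable_one_iff.mpr hs).norm.mul_norm hc.norm).congr fun p => ?_
  simp only [norm_mul, norm_term_eq, Circle.norm_coe, Pi.one_apply, norm_one]

theorem hasSum_expZetaLSeries (θ : UnitAddCircle) {s : ℂ} (hs : 1 < s.re)
    (hc : LSeriesSummable c s) :
    HasSum (fun p : ℕ × ℕ => term (fun m => (toCircle (m • p.2 • θ) : ℂ)) s p.1 * term c s p.2)
      (expZetaLSeries c θ s) := by
  have hsum := (summable_norm_toCircle_term_mul_term θ hs hc).of_norm
  have hswap := (Equiv.prodComm ℕ ℕ).hasSum_iff.mpr hsum.hasSum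
  have hrows := hswap.prod_fiberwise fun l =>
    (LSeriesHasSum_toCircle_nsmul (l • θ) hs).mul_right (term c s l)
  refine hsum.hasSum_iff.mpr ?_
  rw [← hrows.tsum_eq, expZetaLSeries, LSeries]
  simp only [term_mul_eq_mul_term]

theorem periodic_comp_nsmul {G X : Type*} [AddMonoid G] (F : G → X) (θ : G) :
    Function.Periodic (fun l : ℕ => F (l • θ)) (addOrderOf θ) := fun l => by
  simp only [add_nsmul, addOrderOf_nsmul_eq_zero, add_zero]

theorem LSeries_mul_comp_nsmul (hθ : IsOfFinAddOrder θ) (F : UnitAddCircle → ℂ) {s : ℂ}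
    (hc : LSeriesSummable c s) :
    LSeries (fun l => c l * F (l • θ)) s =
      ∑ r ∈ Finset.range (addOrderOf θ),
        F (r • θ) * LSeries ({n | n % addOrderOf θ = r}.indicator c) s :=
  (LSeriesHasSum_mul_periodic (periodic_comp_nsmul F θ) hθ.addOrderOf_pos.ne' hc).LSeries_eq

theorem expZetaLSeries_eq_sum (hθ : IsOfFinAddOrder θ) (hc : ∀ s, LSeriesSummable c s) :
    expZetaLSeries c θ = fun s => ∑ r ∈ Finset.range (addOrderOf θ),
      expZeta (r • θ) s * LSeries ({n | n % addOrderOf θ = r}.indicator c) s :=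
  funext fun s => LSeries_mul_comp_nsmul hθ (expZeta · s) (hc s)

theorem differentiableOn_expZetaLSeries (hθ : IsOfFinAddOrder θ) (hc : ∀ s, LSeriesSummable c s) :
    DifferentiableOn ℂ (expZetaLSeries c θ) {1}ᶜ := by
  rw [expZetaLSeries_eq_sum hθ hc]
  refine DifferentiableOn.fun_sum fun r _ s hs => DifferentiableAt.differentiableWithinAt ?_
  exact (differentiableAt_expZeta _ s (Or.inl hs)).mul
    (LSeries_differentiable (fun s => LSeriesSummable_indicator (hc s) _) s)

theorem tendsto_sub_one_mul_expZetaLSeries (hθ : IsOfFinAddOrder θ)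
    (hc : ∀ s, LSeriesSummable c s) :
    Tendsto (fun s => (s - 1) * expZetaLSeries c θ s) (𝓝[≠] 1)
      (𝓝 (LSeries (fun l => c l * if l • θ = 0 then 1 else 0) 1)) := by
  rw [expZetaLSeries_eq_sum hθ hc,
    LSeries_mul_comp_nsmul hθ (fun φ => if φ = 0 then 1 else 0) (hc 1)]
  simp only [Finset.mul_sum, ← mul_assoc]
  refine tendsto_finsetSum _ fun r _ => (tendsto_sub_one_mul_expZeta _).mul ?_
  exact (LSeries_differentiable (fun s => LSeriesSummable_indicator (hc s) _)).continuous
    |>.tendsto 1 |>.mono_left nhdsWithin_le_nhds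

theorem LSeries_mul_ite_nsmul_eq_zero_one (hθ : IsOfFinAddOrder θ) (c : ℕ → ℂ) :
    LSeries (fun l => c l * if l • θ = 0 then 1 else 0) 1 =
      ∑' j, c (addOrderOf θ * j) / (addOrderOf θ * j : ℕ) := by
  rw [← tsum_ite_dvd hθ.addOrderOf_pos.ne' fun l => c l / (l : ℂ), LSeries]
  refine tsum_congr fun l => ?_
  rcases eq_or_ne l 0 with rfl | hl
  · simp
  · simp only [term_of_ne_zero hl, ← addOrderOf_dvd_iff_nsmul_eq_zero, mul_ite, mul_one, mul_zero,
      ite_div, zero_div, cpow_one]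

theorem expZetaLSeries_apply_zero (hθ : IsOfFinAddOrder θ) (hc : LSeriesSummable c 0)
    (hc₀ : c 0 = 0) : expZetaLSeries c θ 0 = -1 / 2 * ∑' j, c (addOrderOf θ * j) +
      ∑' l, if addOrderOf θ ∣ l then 0 else c l * (1 / ((toCircle (l • θ) : ℂ)⁻¹ - 1)) := by
  have hsum : Summable fun l : ℕ => c l * expZeta (l • θ) 0 := by
    refine (LSeriesHasSum_mul_periodic (periodic_comp_nsmul (expZeta · 0) θ) hθ.addOrderOf_pos.ne'
      hc).LSeriesSummable.congr fun l => ?_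
    rw [term_def₀ (by simp [hc₀]), neg_zero, cpow_zero, mul_one]
  rw [expZetaLSeries, LSeries_def₀ (by simp [hc₀])]
  simp only [cpow_zero, div_one]
  rw [tsum_eq_tsum_mul_add_tsum_not_dvd hθ.addOrderOf_pos.ne' hsum, ← tsum_mul_left]
  congr 1
  · refine tsum_congr fun j => ?_
    rw [mul_nsmul, addOrderOf_nsmul_eq_zero, nsmul_zero, expZeta_zero, riemannZeta_zero]
    ring
  · refine tsum_congr fun l => ?_
    split_ifs with hl
    · rfl
    · rw [expZeta_apply_zero (mt addOrderOf_dvd_of_nsmul_eq_zero hl)]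

end Continuation

section Polylogarithm

open HurwitzZeta AddCircle LSeries Topology

/-- The coefficients `xˡ / l` of the outer series of `Q_{h,k}`; the value at `l = 0` is `0`. -/
noncomputable def polylogCoeff (x : ℂ) (l : ℕ) : ℂ := x ^ l / l

variable {x : ℂ}

theorem norm_polylogCoeff_le (x : ℂ) (l : ℕ) : ‖polylogCoeff x l‖ ≤ ‖x‖ ^ l := by
  rw [polylogCoeff, norm_div, norm_pow, Complex.norm_natCast]
  rcases l.eq_zero_or_pos with rfl | hl
  · simp
  · exact div_le_self (by positivity) (by exact_mod_cast hl)

theorem tsum_polylogCoeff_mul_div (x : ℂ) (d : ℕ) :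
    ∑' j, polylogCoeff x (d * j) / (d * j : ℕ) = dilog (x ^ d) / (d : ℂ) ^ 2 := by
  rw [← tsum_succ_of_apply_zero (by simp), dilog, ← tsum_div_const]
  refine tsum_congr fun j => ?_
  rw [polylogCoeff, pow_mul, div_div, div_div]
  push_cast
  ring

theorem tsum_polylogCoeff_mul (hx : ‖x‖ < 1) {d : ℕ} (hd : d ≠ 0) :
    ∑' j, polylogCoeff x (d * j) = -Complex.log (1 - x ^ d) / d := by
  have hxd : ‖x ^ d‖ < 1 := by simpa using pow_lt_one₀ (norm_nonneg x) hx hd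
  rw [← (Complex.hasSum_taylorSeries_neg_log hxd).tsum_eq, ← tsum_div_const]
  refine tsum_congr fun j => ?_
  rw [polylogCoeff, pow_mul, Nat.cast_mul, div_div, mul_comm (j : ℂ)]

theorem Qterm_eq_comp_succ (h k : ℕ) (x s : ℂ) :
    Qterm h k x s = (fun p : ℕ × ℕ =>
      term (fun m => (toCircle (m • p.2 • ((h / k : ℝ) : UnitAddCircle)) : ℂ)) s p.1 *
        term (polylogCoeff x) s p.2) ∘ Prod.map Nat.succ Nat.succ := by
  funext ⟨m, l⟩
  simp only [Function.comp_apply, Prod.map_apply, term_of_ne_zero (Nat.succ_ne_zero _),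
    ← coe_nsmul, coe_toCircle_coe, polylogCoeff, Qterm, ← Nat.cast_add_one,
    natCast_mul_natCast_cpow, cpow_neg, Nat.succ_eq_add_one]
  push_cast
  ring_nf

theorem LSeriesSummable_polylogCoeff (hx : ‖x‖ < 1) (s : ℂ) :
    LSeriesSummable (polylogCoeff x) s :=
  LSeriesSummable_of_norm_le_pow hx (norm_polylogCoeff_le x) s

theorem summable_norm_Qterm (h k : ℕ) (hx : ‖x‖ < 1) {s : ℂ} (hs : 1 < s.re) :
    Summable fun p => ‖Qterm h k x s p‖ := by
  rw [Qterm_eq_comp_succ]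
  exact (summable_norm_toCircle_term_mul_term _ hs (LSeriesSummable_polylogCoeff hx s))
    |>.comp_injective (Nat.succ_injective.prodMap Nat.succ_injective)

theorem hasSum_Qterm (h k : ℕ) (hx : ‖x‖ < 1) {s : ℂ} (hs : 1 < s.re) :
    HasSum (Qterm h k x s) (expZetaLSeries (polylogCoeff x) ((h / k : ℝ) : UnitAddCircle) s) := by
  rw [Qterm_eq_comp_succ, hasSum_comp_succ_iff]
  · exact hasSum_expZetaLSeries _ hs (LSeriesSummable_polylogCoeff hx s)
  · rintro p (hp | hp) <;> simp [hp]

theorem expZetaLSeries_polylogCoeff_apply_zero (hx : ‖x‖ < 1) (h : ℕ) {k d : ℕ} (hd₀ : 0 < d)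
    (hd : addOrderOf ((h / k : ℝ) : UnitAddCircle) = d) :
    expZetaLSeries (polylogCoeff x) ((h / k : ℝ) : UnitAddCircle) 0 =
      1 / (2 * d) * Complex.log (1 - x ^ d) +
        ∑' l : ℕ, if d ∣ l + 1 then 0 else
          x ^ (l + 1) / (l + 1) * (1 / (cexp (-(2 * π * I * (l + 1) * h / k)) - 1)) := by
  rw [expZetaLSeries_apply_zero (addOrderOf_pos_iff.mp (hd ▸ hd₀))
    (LSeriesSummable_polylogCoeff hx 0) (by simp [polylogCoeff]), hd,
    tsum_polylogCoeff_mul hx hd₀.ne', ← tsum_succ_of_apply_zero (by simp)]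
  congr 1
  · ring
  · refine tsum_congr fun l => ?_
    rw [← coe_nsmul, coe_toCircle_coe, ← Complex.exp_neg, polylogCoeff]
    push_cast
    ring_nf

theorem addOrderOf_coe_div (h : ℕ) {k : ℕ} (hk : 0 < k) :
    addOrderOf ((h / k : ℝ) : UnitAddCircle) = k / h.gcd k := by
  have := gcd_mul_addOrderOf_div_eq (1 : ℝ) h hk
  rw [mul_one] at this
  exact (Nat.div_eq_of_eq_mul_right (Nat.gcd_pos_of_pos_right h hk) this.symm).symm

end Polylogarithm

theorem Qhk_analytic_continuation_general (h k : ℕ) (hk : 0 < k) (x : ℂ) (hx : ‖x‖ < 1) :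
    (∀ s : ℂ, 1 < s.re → Summable (fun p : ℕ × ℕ => ‖Qterm h k x s p‖)) ∧
    ∃ Qt : ℂ → ℂ, DifferentiableOn ℂ Qt {(1 : ℂ)}ᶜ ∧
      (∀ s : ℂ, 1 < s.re → HasSum (fun p : ℕ × ℕ => Qterm h k x s p) (Qt s)) ∧
      (∃ g : ℂ → ℂ, Differentiable ℂ g ∧ (∀ s : ℂ, s ≠ 1 → g s = (s - 1) * Qt s) ∧
        g 1 = dilog (x ^ (k / h.gcd k)) / ((k / h.gcd k : ℕ) : ℂ) ^ 2) ∧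
      Qt 0 = (1 / (2 * ((k / h.gcd k : ℕ) : ℂ))) * Complex.log (1 - x ^ (k / h.gcd k)) +
        ∑' l : ℕ, (if k / h.gcd k ∣ (l + 1) then 0 else
          x ^ (l + 1) / (l + 1) *
            (1 / (Complex.exp (-(2 * Real.pi * Complex.I * (l + 1) * h / k)) - 1))) := by
  have hd := addOrderOf_coe_div h hk
  have hd₀ : 0 < k / h.gcd k := Nat.div_gcd_pos_of_pos_right h hk
  have hθ : IsOfFinAddOrder ((h / k : ℝ) : UnitAddCircle) := addOrderOf_pos_iff.mp (hd ▸ hd₀)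
  have hc := LSeriesSummable_polylogCoeff hx
  have hdiff := differentiableOn_expZetaLSeries hθ hc
  refine ⟨fun s hs => summable_norm_Qterm h k hx hs, _, hdiff, fun s hs => hasSum_Qterm h k hx hs,
    ?_, expZetaLSeries_polylogCoeff_apply_zero hx h hd₀ hd⟩
  rw [← tsum_polylogCoeff_mul_div, ← hd, ← LSeries_mul_ite_nsmul_eq_zero_one hθ]
  exact exists_differentiable_eq_sub_mul hdiff (tendsto_sub_one_mul_expZetaLSeries hθ hc)

/-- The double series `Q_{h,k}(s)` converges absolutely for `Re s > 1` and has an analytic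
continuation `Q̃` to `ℂ ∖ {1}` with a simple pole at `s = 1` of residue `Li₂(x^k)/k²`
(in the sense that `(s-1)·Q̃(s)` extends to an entire function with value `Li₂(x^k)/k²`
at `s = 1`), and `Q̃(0) = (1/2k)·ln(1-x^k) + ∑_{l≥1, k∤l} (x^l/l)/(e^{-2πi l h/k}-1)`. -/
theorem Qhk_analytic_continuation (h k : ℕ) (hhk : h < k) (hco : Nat.Coprime h k)
    (x : ℂ) (hx : ‖x‖ < 1) :
    (∀ s : ℂ, 1 < s.re → Summable (fun p : ℕ × ℕ => ‖Qterm h k x s p‖)) ∧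
    ∃ Qt : ℂ → ℂ, DifferentiableOn ℂ Qt {(1 : ℂ)}ᶜ ∧
      (∀ s : ℂ, 1 < s.re → HasSum (fun p : ℕ × ℕ => Qterm h k x s p) (Qt s)) ∧
      (∃ g : ℂ → ℂ, Differentiable ℂ g ∧ (∀ s : ℂ, s ≠ 1 → g s = (s - 1) * Qt s) ∧
        g 1 = dilog (x ^ k) / (k : ℂ) ^ 2) ∧
      Qt 0 = (1 / (2 * (k : ℂ))) * Complex.log (1 - x ^ k) +
        ∑' l : ℕ, (if k ∣ (l + 1) then 0 else
          x ^ (l + 1) / (l + 1) *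
            (1 / (Complex.exp (-(2 * Real.pi * Complex.I * (l + 1) * h / k)) - 1))) := by
  simpa [hco.gcd_eq_one] using Qhk_analytic_continuation_general h k (by omega) x hx
end
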